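/- arXiv:1405.0356 — 3 statements merged into one kernel-verified Lean document; each statement's English description precedes it below -/
import Mathlib

section
/- Define μ̂(ζ) := ζ^{−2}·((ζ/2)·(e^ζ + 1)/(e^ζ − 1) − 1) for ζ ∈ ℂ with e^ζ ≠ 1. Then for every θ ∈ (−π/2, π/2) and every z ∈ ℂ with Re(z·e^{iθ}) > 0, the integral e^{iθ}∫₀^{+∞} e^{−z·ξe^{iθ}} μ̂(ξe^{iθ}) dξ converges and Γ(z) = √(2π)·exp((z − 1/2)·Log z − z)·exp(e^{iθ}∫₀^{+∞} e^{−z·ξe^{iθ}} μ̂(ξe^{iθ}) dξ), where Log is the principal branch of the logarithm and Γ is the complex Gamma function. -/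
open MeasureTheory

/-- The Borel transform of the Stirling series:
`μ̂(ζ) = ζ^{-2}·((ζ/2)·(e^ζ+1)/(e^ζ-1) − 1)`. -/
noncomputable def muHat (ζ : ℂ) : ℂ :=
  ζ ^ (-2 : ℤ) * (ζ / 2 * ((Complex.exp ζ + 1) / (Complex.exp ζ - 1)) - 1)

theorem integral_half_sub_mul_exp {ζ : ℂ} (hζ : ζ ≠ 0) :
    ∫ t in (0:ℝ)..1, (1 / 2 - (t : ℂ)) * Complex.exp (-ζ * t) =
      (1 + Complex.exp (-ζ)) / (2 * ζ) - (1 - Complex.exp (-ζ)) / ζ ^ 2 := by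
  have key : ∀ t : ℝ, HasDerivAt
      (fun t : ℝ => Complex.exp (-ζ * t) * ((t - 1 / 2 : ℂ) / ζ + 1 / ζ ^ 2))
      ((1 / 2 - (t : ℂ)) * Complex.exp (-ζ * t)) t := by
    intro t
    have h0 : HasDerivAt (fun t : ℝ => (t : ℂ)) 1 t := Complex.ofRealCLM.hasDerivAt
    have h1 := (h0.const_mul (-ζ)).cexp
    have h2 := ((h0.sub_const (1 / 2)).div_const ζ).add_const (1 / ζ ^ 2)
    refine (h1.mul h2).congr_deriv ?_
    field_simp
    ring
  rw [intervalIntegral.integral_eq_sub_of_hasDerivAt (fun t _ => key t)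
    ((by fun_prop : Continuous _).intervalIntegrable _ _)]
  simp only [Complex.ofReal_zero, Complex.ofReal_one, mul_zero, mul_one, Complex.exp_zero]
  field_simp
  ring

theorem muHat_mul_one_sub_exp_neg {ζ : ℂ} (hζ : ζ ≠ 0) (h : Complex.exp ζ ≠ 1) :
    muHat ζ * (1 - Complex.exp (-ζ)) =
      ∫ t in (0:ℝ)..1, (1 / 2 - (t : ℂ)) * Complex.exp (-ζ * t) := by
  have h1 : Complex.exp ζ - 1 ≠ 0 := sub_ne_zero.mpr h
  have h2 := Complex.exp_ne_zero ζ
  rw [integral_half_sub_mul_exp hζ, muHat, Complex.exp_neg, zpow_neg]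
  norm_cast
  field_simp

theorem norm_exp_neg_sub_one_le {ζ : ℂ} (hζ : 0 ≤ ζ.re) : ‖Complex.exp (-ζ) - 1‖ ≤ ‖ζ‖ := by
  have := (convex_halfSpace_re_ge 0).norm_image_sub_le_of_norm_hasDerivWithin_le
    (f := fun u : ℂ => Complex.exp (-u)) (f' := fun u => -Complex.exp (-u)) (C := 1)
    (x := 0) (y := ζ)
    (fun u _ => by simpa using (hasDerivAt_id u).neg.cexp.hasDerivWithinAt)
    (fun u hu => by
      rw [norm_neg, Complex.norm_exp, Real.exp_le_one_iff]
      simpa using hu)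
    (by simp) hζ
  simpa using this

theorem norm_half_sub_ofReal_le_one {t : ℝ} (ht : t ∈ Set.Ioc (0:ℝ) 1) :
    ‖(1 / 2 - (t : ℂ))‖ ≤ 1 := by
  rw [show (1 / 2 - (t : ℂ)) = ((1 / 2 - t : ℝ) : ℂ) by push_cast; ring, Complex.norm_real,
    Real.norm_eq_abs, abs_le]
  constructor <;> linarith [ht.1, ht.2]

theorem norm_integral_half_sub_mul_exp_le_one {ζ : ℂ} (hζ : 0 ≤ ζ.re) :
    ‖∫ t in (0:ℝ)..1, (1 / 2 - (t : ℂ)) * Complex.exp (-ζ * t)‖ ≤ 1 := by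
  have := intervalIntegral.norm_integral_le_of_norm_le_const (a := 0) (b := 1) (C := 1)
    (f := fun t : ℝ => (1 / 2 - (t : ℂ)) * Complex.exp (-ζ * t)) (fun t ht => by
      rw [Set.uIoc_of_le zero_le_one] at ht
      rw [norm_mul, Complex.norm_exp]
      have h1 : ‖(1 / 2 - (t : ℂ))‖ ≤ 1 := norm_half_sub_ofReal_le_one ht
      have h2 : Real.exp (-ζ * t).re ≤ 1 := by
        rw [Real.exp_le_one_iff]
        simpa using mul_nonneg hζ ht.1.le
      exact mul_le_one₀ h1 (Real.exp_pos _).le h2)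
  simpa using this

theorem norm_integral_half_sub_mul_exp_le_norm {ζ : ℂ} (hζ : 0 ≤ ζ.re) :
    ‖∫ t in (0:ℝ)..1, (1 / 2 - (t : ℂ)) * Complex.exp (-ζ * t)‖ ≤ ‖ζ‖ := by
  have h0 : ∫ t in (0:ℝ)..1, (1 / 2 - (t : ℂ)) = 0 := by
    rw [intervalIntegral.integral_sub (by simp)
      (Complex.continuous_ofReal.intervalIntegrable _ _), intervalIntegral.integral_ofReal]
    simp
  have h : ∫ t in (0:ℝ)..1, (1 / 2 - (t : ℂ)) * Complex.exp (-ζ * t) =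
      ∫ t in (0:ℝ)..1, (1 / 2 - (t : ℂ)) * (Complex.exp (-ζ * t) - 1) := by
    simp_rw [mul_sub, mul_one]
    rw [intervalIntegral.integral_sub
      ((by fun_prop : Continuous _).intervalIntegrable _ _)
      ((by fun_prop : Continuous _).intervalIntegrable _ _), h0, sub_zero]
  rw [h]
  have := intervalIntegral.norm_integral_le_of_norm_le_const (a := 0) (b := 1) (C := ‖ζ‖)
    (f := fun t : ℝ => (1 / 2 - (t : ℂ)) * (Complex.exp (-ζ * t) - 1)) (fun t ht => by
      rw [Set.uIoc_of_le zero_le_one] at ht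
      rw [norm_mul]
      have h1 : ‖(1 / 2 - (t : ℂ))‖ ≤ 1 := norm_half_sub_ofReal_le_one ht
      have h2 : ‖Complex.exp (-ζ * t) - 1‖ ≤ ‖ζ‖ := by
        have := norm_exp_neg_sub_one_le (ζ := ζ * t) (by simpa using mul_nonneg hζ ht.1.le)
        rw [← neg_mul, norm_mul, Complex.norm_real, Real.norm_of_nonneg ht.1.le] at this
        exact this.trans (mul_le_of_le_one_right (norm_nonneg _) ht.2)
      calc _ ≤ 1 * ‖ζ‖ := mul_le_mul h1 h2 (norm_nonneg _) zero_le_one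
        _ = _ := one_mul _)
  simpa using this

theorem exp_ne_one_of_re_pos {ζ : ℂ} (hζ : 0 < ζ.re) : Complex.exp ζ ≠ 1 := by
  intro h
  have := congrArg norm h
  rw [Complex.norm_exp, norm_one, Real.exp_eq_one_iff] at this
  exact hζ.ne' this

theorem norm_muHat_le {ζ : ℂ} (hζ : 0 < ζ.re) : ‖muHat ζ‖ ≤ ‖ζ‖ / ζ.re + 1 := by
  have h0 : ζ ≠ 0 := by rintro rfl; simp at hζ
  set K := ∫ t in (0:ℝ)..1, (1 / 2 - (t : ℂ)) * Complex.exp (-ζ * t) with hK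
  have h1 : ‖muHat ζ‖ * ‖1 - Complex.exp (-ζ)‖ = ‖K‖ := by
    rw [← norm_mul, muHat_mul_one_sub_exp_neg h0 (exp_ne_one_of_re_pos hζ)]
  have h2 : ζ.re / (1 + ζ.re) ≤ ‖1 - Complex.exp (-ζ)‖ := by
    have h3 : 1 - Real.exp (-ζ.re) ≤ ‖1 - Complex.exp (-ζ)‖ := by
      simpa [Complex.norm_exp] using norm_sub_norm_le (1 : ℂ) (Complex.exp (-ζ))
    refine le_trans ?_ h3
    have h4 : Real.exp (-ζ.re) ≤ 1 / (1 + ζ.re) := by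
      rw [Real.exp_neg, ← one_div]
      exact one_div_le_one_div_of_le (by linarith) (by linarith [Real.add_one_le_exp ζ.re])
    have h5 : ζ.re / (1 + ζ.re) = 1 - 1 / (1 + ζ.re) := by field_simp; ring
    linarith
  have h6 : ‖muHat ζ‖ * (ζ.re / (1 + ζ.re)) ≤ ‖K‖ :=
    (mul_le_mul_of_nonneg_left h2 (norm_nonneg _)).trans h1.le
  have h7 : ‖muHat ζ‖ * ζ.re ≤ ‖K‖ * (1 + ζ.re) := by
    rw [← mul_div_assoc, div_le_iff₀ (by linarith)] at h6
    exact h6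
  have h8 := norm_integral_half_sub_mul_exp_le_one hζ.le
  have h9 := norm_integral_half_sub_mul_exp_le_norm hζ.le
  rw [← hK] at h8 h9
  rw [← sub_nonneg, show ‖ζ‖ / ζ.re + 1 - ‖muHat ζ‖ =
    (‖ζ‖ + ζ.re - ‖muHat ζ‖ * ζ.re) / ζ.re by field_simp]
  refine div_nonneg ?_ hζ.le
  nlinarith

theorem measurable_muHat : Measurable muHat := by
  unfold muHat
  simp only [zpow_neg]
  norm_cast
  fun_prop

theorem integral_half_sub_div_add {z : ℂ} (hz : z ∈ Complex.slitPlane) :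
    ∫ t in (0:ℝ)..1, (1 / 2 - (t : ℂ)) / (z + t) =
      (z + 1 / 2) * (Complex.log (z + 1) - Complex.log z) - 1 := by
  have hmem : ∀ t : ℝ, 0 ≤ t → z + t ∈ Complex.slitPlane := by
    intro t ht
    rcases hz with h | h
    · left; simp; linarith
    · right; simpa using h
  have key : ∀ t ∈ Set.uIcc (0:ℝ) 1, HasDerivAt
      (fun t : ℝ => (z + 1 / 2) * Complex.log (z + t) - t)
      ((1 / 2 - (t : ℂ)) / (z + t)) t := by
    intro t ht
    rw [Set.uIcc_of_le zero_le_one] at ht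
    have hm := hmem t ht.1
    have h0 : HasDerivAt (fun t : ℝ => (t : ℂ)) 1 t := Complex.ofRealCLM.hasDerivAt
    have h1 := (((h0.const_add z).clog_real hm).const_mul (z + 1 / 2)).sub h0
    have := Complex.slitPlane_ne_zero hm
    refine h1.congr_deriv ?_
    field_simp
    ring
  rw [intervalIntegral.integral_eq_sub_of_hasDerivAt key
    (ContinuousOn.intervalIntegrable (ContinuousOn.div (by fun_prop) (by fun_prop) ?_))]
  · simp
    ring
  · intro t ht
    rw [Set.uIcc_of_le zero_le_one] at ht
    exact Complex.slitPlane_ne_zero (hmem t ht.1)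

theorem norm_exp_neg_mul_ofReal_mul (z w : ℂ) (ξ : ℝ) :
    ‖Complex.exp (-z * (ξ * w))‖ = Real.exp (-(z * w).re * ξ) := by
  rw [Complex.norm_exp, show -z * (ξ * w) = -(z * w) * ξ by ring, Complex.re_mul_ofReal,
    Complex.neg_re]

theorem norm_exp_mul_muHat_le {w : ℂ} (hw : 0 < w.re) (z : ℂ) {ξ : ℝ} (hξ : 0 < ξ) :
    ‖Complex.exp (-z * (ξ * w)) * muHat (ξ * w)‖ ≤
      (‖w‖ / w.re + 1) * Real.exp (-(z * w).re * ξ) := by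
  rw [norm_mul, norm_exp_neg_mul_ofReal_mul, mul_comm]
  refine mul_le_mul_of_nonneg_right ?_ (Real.exp_pos _).le
  have h : 0 < ((ξ : ℂ) * w).re := by rw [Complex.re_ofReal_mul]; positivity
  have := norm_muHat_le h
  rwa [Complex.re_ofReal_mul, norm_mul, Complex.norm_real, Real.norm_of_nonneg hξ.le,
    mul_div_mul_left _ _ hξ.ne'] at this

theorem integrableOn_exp_mul_muHat {w z : ℂ} (hw : 0 < w.re) (hz : 0 < (z * w).re) :
    IntegrableOn (fun ξ : ℝ => Complex.exp (-z * (ξ * w)) * muHat (ξ * w)) (Set.Ioi 0) := by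
  refine Integrable.mono'
    ((integrableOn_exp_mul_Ioi (neg_lt_zero.mpr hz) 0).const_mul (‖w‖ / w.re + 1)) ?_ ?_
  · refine Measurable.aestronglyMeasurable (Measurable.mul (by fun_prop) ?_)
    exact measurable_muHat.comp (by fun_prop)
  · exact (ae_restrict_iff' measurableSet_Ioi).mpr
      (Filter.Eventually.of_forall fun ξ hξ => norm_exp_mul_muHat_le hw z hξ)

/-- The Laplace transform of `μ̂` along the ray `w · (0, ∞)`. -/
noncomputable def laplaceMuHat (w z : ℂ) : ℂ :=
  w * ∫ ξ in Set.Ioi (0:ℝ), Complex.exp (-z * (ξ * w)) * muHat (ξ * w)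

theorem norm_laplaceMuHat_le {w z : ℂ} (hw : 0 < w.re) (hz : 0 < (z * w).re) :
    ‖laplaceMuHat w z‖ ≤ ‖w‖ * (‖w‖ / w.re + 1) / (z * w).re := by
  have h := norm_integral_le_of_norm_le
    ((integrableOn_exp_mul_Ioi (neg_lt_zero.mpr hz) 0).const_mul (‖w‖ / w.re + 1))
    ((ae_restrict_iff' measurableSet_Ioi).mpr
      (Filter.Eventually.of_forall fun ξ hξ => norm_exp_mul_muHat_le hw z hξ))
  rw [integral_const_mul, integral_exp_mul_Ioi (neg_lt_zero.mpr hz)] at h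
  rw [laplaceMuHat, norm_mul, mul_div_assoc]
  refine mul_le_mul_of_nonneg_left (h.trans_eq ?_) (norm_nonneg _)
  rw [mul_zero, Real.exp_zero, neg_div_neg_eq, mul_one_div]

theorem mem_slitPlane_of_mul_re_pos {w z : ℂ} (hw : 0 < w.re) (hz : 0 < (z * w).re) :
    z ∈ Complex.slitPlane := by
  rw [Complex.mem_slitPlane_iff]
  by_contra! h
  rw [Complex.mul_re, h.2] at hz
  nlinarith [h.1]

theorem add_ofReal_mul_re (w z : ℂ) (t : ℝ) :
    ((z + t) * w).re = (z * w).re + t * w.re := by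
  rw [add_mul, Complex.add_re, Complex.re_ofReal_mul]

theorem integrable_half_sub_mul_exp_prod {w z : ℂ} (hw : 0 < w.re) (hz : 0 < (z * w).re) :
    Integrable (Function.uncurry fun (t ξ : ℝ) =>
        (1 / 2 - (t : ℂ)) * Complex.exp (-(z + t) * w * ξ))
      ((volume.restrict (Set.uIoc (0:ℝ) 1)).prod (volume.restrict (Set.Ioi 0))) := by
  have hdom : Integrable (fun p : ℝ × ℝ => (1 : ℝ) * Real.exp (-(z * w).re * p.2))
      ((volume.restrict (Set.uIoc (0:ℝ) 1)).prod (volume.restrict (Set.Ioi 0))) :=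
    Integrable.mul_prod (f := fun _ : ℝ => (1 : ℝ))
      (g := fun ξ : ℝ => Real.exp (-(z * w).re * ξ))
      (by rw [Set.uIoc_of_le zero_le_one]; exact integrable_const _)
      (integrableOn_exp_mul_Ioi (neg_lt_zero.mpr hz) 0)
  refine hdom.mono' (Continuous.aestronglyMeasurable (by unfold Function.uncurry; fun_prop)) ?_
  rw [Measure.prod_restrict, ae_restrict_iff' (measurableSet_uIoc.prod measurableSet_Ioi)]
  refine Filter.Eventually.of_forall fun ⟨t, ξ⟩ ⟨ht, hξ⟩ => ?_
  rw [Set.uIoc_of_le zero_le_one] at ht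
  simp only [Set.mem_Ioi] at ht hξ
  simp only [Function.uncurry_apply_pair, norm_mul]
  refine mul_le_mul ?_ ?_ (norm_nonneg _) zero_le_one
  · exact norm_half_sub_ofReal_le_one ht
  · rw [Complex.norm_exp, Real.exp_le_exp, Complex.re_mul_ofReal, neg_mul, Complex.neg_re,
      add_ofReal_mul_re]
    have := mul_nonneg (mul_nonneg ht.1.le hw.le) hξ.le
    nlinarith

theorem laplaceMuHat_sub_laplaceMuHat_add_one {w z : ℂ} (hw : 0 < w.re)
    (hz : 0 < (z * w).re) :
    laplaceMuHat w z - laplaceMuHat w (z + 1) =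
      (z + 1 / 2) * (Complex.log (z + 1) - Complex.log z) - 1 := by
  have hw0 : w ≠ 0 := by rintro rfl; simp at hw
  have hz1 : 0 < ((z + 1) * w).re := by
    have := add_ofReal_mul_re w z 1
    rw [Complex.ofReal_one] at this
    linarith
  have hpt : ∀ ξ ∈ Set.Ioi (0:ℝ),
      Complex.exp (-z * (ξ * w)) * muHat (ξ * w) -
        Complex.exp (-(z + 1) * (ξ * w)) * muHat (ξ * w) =
      ∫ t in (0:ℝ)..1, (1 / 2 - (t : ℂ)) * Complex.exp (-(z + t) * w * ξ) := by
    intro ξ hξ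
    have hpos : 0 < ((ξ : ℂ) * w).re := by
      rw [Complex.re_ofReal_mul]
      exact mul_pos hξ hw
    have h := muHat_mul_one_sub_exp_neg (mul_ne_zero (by exact_mod_cast (ne_of_gt hξ)) hw0)
      (exp_ne_one_of_re_pos hpos)
    calc _ = Complex.exp (-z * (ξ * w)) *
          (muHat (ξ * w) * (1 - Complex.exp (-(ξ * w)))) := by
          rw [show -(z + 1) * (ξ * w) = -z * (ξ * w) + -(ξ * w) by ring, Complex.exp_add]
          ring
      _ = _ := by
          rw [h, ← intervalIntegral.integral_const_mul]
          congr 1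
          ext t
          rw [show -(z + t) * w * ξ = -z * (ξ * w) + -(ξ * w) * t by ring, Complex.exp_add]
          ring
  rw [laplaceMuHat, laplaceMuHat, ← mul_sub, ← integral_sub (integrableOn_exp_mul_muHat hw hz)
    (integrableOn_exp_mul_muHat hw hz1), setIntegral_congr_fun measurableSet_Ioi hpt,
    ← intervalIntegral_integral_swap (integrable_half_sub_mul_exp_prod hw hz),
    ← integral_half_sub_div_add (mem_slitPlane_of_mul_re_pos hw hz),
    ← intervalIntegral.integral_const_mul]
  refine intervalIntegral.integral_congr fun t ht => ?_
  rw [Set.uIcc_of_le zero_le_one] at ht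
  have hre : 0 < ((z + t) * w).re := by
    rw [add_ofReal_mul_re]
    exact add_pos_of_pos_of_nonneg hz (mul_nonneg ht.1 hw.le)
  have hne : z + t ≠ 0 := fun h => by simp [h] at hre
  rw [integral_const_mul, integral_exp_mul_complex_Ioi (by rwa [neg_mul, Complex.neg_re, neg_lt_zero])]
  simp only [Complex.ofReal_zero, mul_zero, Complex.exp_zero]
  field_simp

theorem tendsto_laplaceMuHat_add_natCast {w z : ℂ} (hw : 0 < w.re) (hz : 0 < (z * w).re) :
    Filter.Tendsto (fun n : ℕ => laplaceMuHat w (z + n)) Filter.atTop (nhds 0) := by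
  have hre : ∀ n : ℕ, ((z + n) * w).re = (z * w).re + n * w.re := fun n => by
    exact_mod_cast add_ofReal_mul_re w z n
  refine squeeze_zero_norm (fun n => norm_laplaceMuHat_le hw
    (by rw [hre]; exact add_pos_of_pos_of_nonneg hz (by positivity))) ?_
  simp_rw [hre]
  exact Filter.Tendsto.const_div_atTop (Filter.tendsto_atTop_add_const_left _ _
    (tendsto_natCast_atTop_atTop.atTop_mul_const hw)) _

/-- The Borel–Laplace sum of the Stirling series of `Γ`. -/
noncomputable def borelStirling (w z : ℂ) : ℂ :=
  (Real.sqrt (2 * Real.pi) : ℂ) * Complex.exp ((z - 1 / 2) * Complex.log z - z) *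
    Complex.exp (laplaceMuHat w z)

theorem borelStirling_add_one {w z : ℂ} (hw : 0 < w.re) (hz : 0 < (z * w).re) :
    borelStirling w (z + 1) = z * borelStirling w z := by
  have h := laplaceMuHat_sub_laplaceMuHat_add_one hw hz
  have hz0 := Complex.slitPlane_ne_zero (mem_slitPlane_of_mul_re_pos hw hz)
  rw [borelStirling, borelStirling, mul_assoc, mul_assoc, ← Complex.exp_add, ← Complex.exp_add]
  rw [show ∀ a b : ℂ, z * (a * Complex.exp b) = a * Complex.exp (Complex.log z + b) from
    fun a b => by rw [Complex.exp_add, Complex.exp_log hz0]; ring]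
  congr 2
  linear_combination -h

theorem borelStirling_add_natCast {w z : ℂ} (hw : 0 < w.re) (hz : 0 < (z * w).re) (n : ℕ) :
    borelStirling w (z + n) = (∏ j ∈ Finset.range n, (z + j)) * borelStirling w z := by
  induction n with
  | zero => simp
  | succ n ih =>
    have hn : 0 < ((z + n) * w).re := by
      have := add_ofReal_mul_re w z n
      rw [Complex.ofReal_natCast] at this
      rw [this]
      positivity
    rw [Nat.cast_succ, ← add_assoc, borelStirling_add_one hw hn, ih, Finset.prod_range_succ]
    ring

theorem tendsto_stirling_ratio :
    Filter.Tendsto (fun n : ℕ => (Real.sqrt (2 * Real.pi) : ℂ) *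
      Complex.exp ((n + 1 / 2) * Complex.log n - n) / (n.factorial : ℂ))
      Filter.atTop (nhds 1) := by
  have hpi : Real.sqrt Real.pi ≠ 0 := by positivity
  have h := (Stirling.tendsto_stirlingSeq_sqrt_pi.inv₀ hpi).const_mul (Real.sqrt Real.pi)
  rw [mul_inv_cancel₀ hpi] at h
  refine (by simpa using h.ofReal : Filter.Tendsto _ _ _).congr' ?_
  filter_upwards [Filter.eventually_gt_atTop 0] with n hn
  have hn' : (0:ℝ) < n := by exact_mod_cast hn
  have hsqrt : Real.exp (1 / 2 * Real.log n) = Real.sqrt n := by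
    rw [Real.sqrt_eq_rpow, Real.rpow_def_of_pos hn', mul_comm]
  have hreal : Real.sqrt Real.pi * (Stirling.stirlingSeq n)⁻¹ =
      Real.sqrt (2 * Real.pi) * Real.exp ((n + 1 / 2) * Real.log n - n) / n.factorial := by
    rw [Stirling.stirlingSeq, Real.exp_sub, add_mul, Real.exp_add, ← Real.log_pow,
      Real.exp_log (by positivity), hsqrt, div_pow, Real.exp_one_pow,
      Real.sqrt_mul zero_le_two, Real.sqrt_mul zero_le_two]
    field_simp
  have hc := congrArg (fun x : ℝ => (x : ℂ)) hreal
  push_cast [Complex.ofReal_log hn'.le] at hc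
  exact hc

theorem tendsto_mul_log_one_add_div (a b : ℂ) :
    Filter.Tendsto (fun n : ℕ => (a + n) * Complex.log (1 + b / n)) Filter.atTop (nhds b) := by
  have h1 : Filter.Tendsto (fun n : ℕ => n * Complex.log (1 + b / n)) Filter.atTop (nhds b) := by
    refine Complex.tendsto_nat_mul_log_one_add_of_tendsto (tendsto_nhds_of_eventually_eq ?_)
    filter_upwards [Filter.eventually_ne_atTop 0] with n hn
    exact mul_div_cancel₀ b (by exact_mod_cast hn)
  have h2 : Filter.Tendsto (fun n : ℕ => (1 : ℂ) + b / n) Filter.atTop (nhds 1) := by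
    simpa using (tendsto_const_div_atTop_nhds_zero_nat b).const_add 1
  have h3 := ((continuousAt_clog Complex.one_mem_slitPlane).tendsto.comp h2).const_mul a
  rw [Complex.log_one, mul_zero] at h3
  have h4 := h3.add h1
  rw [zero_add] at h4
  refine h4.congr fun n => ?_
  simp only [Function.comp_apply]
  ring

theorem borelStirling_add_natCast_succ_div {w z : ℂ} {n : ℕ} (hn : n ≠ 0)
    (h : z + (n + 1 : ℕ) ≠ 0) :
    borelStirling w (z + (n + 1 : ℕ)) / ((n : ℂ) ^ z * n.factorial) =
      (Real.sqrt (2 * Real.pi) * Complex.exp ((n + 1 / 2) * Complex.log n - n) / n.factorial) *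
        Complex.exp ((z + 1 / 2 + n) * Complex.log (1 + (z + 1) / n) - (z + 1)) *
        Complex.exp (laplaceMuHat w (z + (n + 1 : ℕ))) := by
  have hn0 : (n : ℂ) ≠ 0 := by exact_mod_cast hn
  have hfac : (n.factorial : ℂ) ≠ 0 := by exact_mod_cast n.factorial_ne_zero
  have hprod : z + (n + 1 : ℕ) = (n : ℂ) * (1 + (z + 1) / n) := by
    push_cast
    field_simp
    ring
  have hlog : Complex.log (z + (n + 1 : ℕ)) =
      Complex.log n + Complex.log (1 + (z + 1) / n) := by
    rw [hprod] at h ⊢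
    have := Complex.log_ofReal_mul (r := n) (by positivity) (right_ne_zero_of_mul h)
    rwa [Complex.ofReal_log (by positivity), Complex.ofReal_natCast] at this
  have hexp : Complex.exp ((z + (n + 1 : ℕ) - 1 / 2) * Complex.log (z + (n + 1 : ℕ)) -
      (z + (n + 1 : ℕ))) = (n : ℂ) ^ z * Complex.exp ((n + 1 / 2) * Complex.log n - n) *
        Complex.exp ((z + 1 / 2 + n) * Complex.log (1 + (z + 1) / n) - (z + 1)) := by
    rw [Complex.cpow_def_of_ne_zero hn0, ← Complex.exp_add, ← Complex.exp_add, hlog]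
    congr 1
    push_cast
    ring
  have hpow : (n : ℂ) ^ z ≠ 0 := by simp [Complex.cpow_def_of_ne_zero hn0]
  rw [borelStirling, hexp]
  field_simp

theorem borelStirling_eq_Gamma {w z : ℂ} (hw : 0 < w.re) (hz : 0 < (z * w).re) :
    borelStirling w z = Complex.Gamma z := by
  have hne : ∀ n : ℕ, z + n ≠ 0 := fun n h => by
    have := add_ofReal_mul_re w z n
    rw [Complex.ofReal_natCast, h, zero_mul, Complex.zero_re] at this
    have : 0 ≤ n * w.re := by positivity
    linarith
  have hL := (Complex.continuous_exp.tendsto 0).comp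
    ((tendsto_laplaceMuHat_add_natCast hw hz).comp (Filter.tendsto_add_atTop_nat 1))
  have hsub := (tendsto_mul_log_one_add_div (z + 1 / 2) (z + 1)).sub_const (z + 1)
  rw [sub_self] at hsub
  have hlog := (Complex.continuous_exp.tendsto 0).comp hsub
  have hratio : Filter.Tendsto
      (fun n : ℕ => borelStirling w (z + (n + 1 : ℕ)) / ((n : ℂ) ^ z * n.factorial))
      Filter.atTop (nhds 1) := by
    have h := (tendsto_stirling_ratio.mul hlog).mul hL
    rw [Complex.exp_zero, mul_one, mul_one] at h
    refine h.congr' ?_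
    filter_upwards [Filter.eventually_ne_atTop 0] with n hn
    exact (borelStirling_add_natCast_succ_div hn (hne (n + 1))).symm
  have hprod := (Complex.GammaSeq_tendsto_Gamma z).mul hratio
  rw [mul_one] at hprod
  refine tendsto_nhds_unique (tendsto_const_nhds.congr' ?_) hprod
  filter_upwards [Filter.eventually_ne_atTop 0] with n hn
  have hn0 : (n : ℂ) ≠ 0 := by exact_mod_cast hn
  have hpow : (n : ℂ) ^ z ≠ 0 := by simp [Complex.cpow_def_of_ne_zero hn0]
  have hfac : (n.factorial : ℂ) ≠ 0 := by exact_mod_cast n.factorial_ne_zero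
  have hP : ∏ j ∈ Finset.range (n + 1), (z + (j : ℂ)) ≠ 0 :=
    Finset.prod_ne_zero_iff.mpr fun j _ => hne j
  rw [borelStirling_add_natCast hw hz, Complex.GammaSeq]
  field_simp

/-- Borel–Laplace summation of the Stirling series: for every direction
`θ ∈ (-π/2, π/2)` and every `z` with `Re(z e^{iθ}) > 0`, the Laplace integral of `μ̂`
in the direction `θ` converges and
`Γ(z) = √(2π)·exp((z-1/2)·Log z − z)·exp(e^{iθ} ∫₀^∞ e^{-zξe^{iθ}} μ̂(ξe^{iθ}) dξ)`. -/
theorem stmt_7 (θ : ℝ) (hθ : θ ∈ Set.Ioo (-(Real.pi / 2)) (Real.pi / 2)) (z : ℂ)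
    (hz : 0 < (z * Complex.exp ((θ : ℂ) * Complex.I)).re) :
    IntegrableOn
        (fun ξ : ℝ => Complex.exp (-z * ((ξ : ℂ) * Complex.exp ((θ : ℂ) * Complex.I))) *
          muHat ((ξ : ℂ) * Complex.exp ((θ : ℂ) * Complex.I)))
        (Set.Ioi (0:ℝ)) ∧
      Complex.Gamma z = (Real.sqrt (2 * Real.pi) : ℂ) *
        Complex.exp ((z - 1 / 2) * Complex.log z - z) *
        Complex.exp (Complex.exp ((θ : ℂ) * Complex.I) *
          (∫ ξ in Set.Ioi (0:ℝ),
            Complex.exp (-z * ((ξ : ℂ) * Complex.exp ((θ : ℂ) * Complex.I))) *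
              muHat ((ξ : ℂ) * Complex.exp ((θ : ℂ) * Complex.I)))) := by
  have hw : 0 < (Complex.exp ((θ : ℂ) * Complex.I)).re := by
    rw [Complex.exp_ofReal_mul_I_re]
    exact Real.cos_pos_of_mem_Ioo hθ
  exact ⟨integrableOn_exp_mul_muHat hw hz, (borelStirling_eq_Gamma hw hz).symm⟩
end

section
/- There exists a sequence (g_n)_{n≥0} of rational numbers such that for every c > 0 and every β ∈ (0, π) there exist L, M > 0 with: for every z ∈ ℂ with |z| > c and |arg z| < β, and every N ∈ ℕ, |(2π)^{−1/2}·exp((1/2 − z)·Log z + z)·Γ(z) − 1 − Σ_{n=0}^{N−1} g_n z^{−n−1}| ≤ L·M^N·N!·|z|^{−N−1}. (Log and arg denote the principal branch of the logarithm and of the argument, and Γ is the complex Gamma function.) -/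
open Finset PowerSeries in
/-- The power series `A` is a `1`-Gevrey expansion at the point `w` of the value `f`,
with constants `L` and `M`. -/
def IsGevreyExpansionAt (A : PowerSeries ℚ) (f w : ℂ) (L M : ℝ) : Prop :=
  ∀ N : ℕ, |((coeff N A : ℚ) : ℝ)| ≤ L * M ^ N * (N.factorial : ℝ) ∧
    ‖f - ∑ n ∈ range N, ((coeff n A : ℚ) : ℂ) * w ^ n‖ ≤ L * M ^ N * (N.factorial : ℝ) * ‖w‖ ^ N

theorem Nat.factorial_succ_mul_factorial_succ_le (a b : ℕ) :
    (a + 1).factorial * (b + 1).factorial ≤ (a + b + 1).factorial := by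
  induction b with
  | zero => simp
  | succ b ih =>
    rw [Nat.factorial_succ (b + 1), show a + (b + 1) + 1 = (a + b + 1) + 1 by ring,
      Nat.factorial_succ (a + b + 1)]
    calc (a + 1).factorial * ((b + 1 + 1) * (b + 1).factorial)
        = (b + 1 + 1) * ((a + 1).factorial * (b + 1).factorial) := by ring
      _ ≤ _ := Nat.mul_le_mul (by omega) ih

theorem Nat.sum_factorial_mul_factorial_sub_le (N : ℕ) :
    ∑ n ∈ Finset.range (N + 1), n.factorial * (N - n).factorial ≤ 3 * N.factorial := by
  rcases N with _ | N
  · simp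
  rw [Finset.sum_range_succ, Finset.sum_range_succ']
  have h : ∑ k ∈ Finset.range N, (k + 1).factorial * (N + 1 - (k + 1)).factorial
      ≤ ∑ k ∈ Finset.range N, N.factorial := by
    refine Finset.sum_le_sum fun k hk => ?_
    obtain ⟨j, rfl⟩ : ∃ j, N = k + j + 1 := ⟨N - k - 1, by have := Finset.mem_range.1 hk; omega⟩
    have := Nat.factorial_succ_mul_factorial_succ_le k j
    rwa [show k + j + 1 + 1 - (k + 1) = j + 1 by omega]
  simp only [Finset.sum_const, Finset.card_range, smul_eq_mul] at h
  simp only [Nat.factorial_zero, Nat.sub_zero, Nat.sub_self, Nat.factorial_succ N]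
  nlinarith [Nat.factorial_pos N]

namespace IsGevreyExpansionAt

open Finset PowerSeries

theorem mul {A B : PowerSeries ℚ} {f g w : ℂ} {L L' M : ℝ} (hL : 0 ≤ L) (hL' : 0 ≤ L')
    (hM : 0 ≤ M) (hf : IsGevreyExpansionAt A f w L M) (hg : IsGevreyExpansionAt B g w L' M) :
    IsGevreyExpansionAt (A * B) (f * g) w (4 * L * L') M := by
  intro N
  have hsum : ∑ n ∈ range (N + 1), ((n.factorial : ℝ) * ((N - n).factorial : ℝ))
      ≤ 3 * (N.factorial : ℝ) := by
    exact_mod_cast Nat.sum_factorial_mul_factorial_sub_le N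
  constructor
  · rw [coeff_mul, Nat.sum_antidiagonal_eq_sum_range_succ_mk]
    push_cast
    calc |∑ n ∈ range (N + 1), ((coeff n A : ℚ) : ℝ) * ((coeff (N - n) B : ℚ) : ℝ)|
        ≤ ∑ n ∈ range (N + 1), L * L' * M ^ N * ((n.factorial : ℝ) * ((N - n).factorial : ℝ)) := by
          refine (abs_sum_le_sum_abs _ _).trans (sum_le_sum fun n hn => ?_)
          have hn' : n + (N - n) = N := by have := mem_range.1 hn; omega
          rw [abs_mul]
          calc _ ≤ (L * M ^ n * (n.factorial : ℝ)) *
                (L' * M ^ (N - n) * ((N - n).factorial : ℝ)) :=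
                mul_le_mul (hf n).1 (hg (N - n)).1 (abs_nonneg _) (by positivity)
            _ = L * L' * M ^ (n + (N - n)) * ((n.factorial : ℝ) * ((N - n).factorial : ℝ)) := by
                rw [pow_add]; ring
            _ = _ := by rw [hn']
      _ ≤ L * L' * M ^ N * (3 * (N.factorial : ℝ)) := by
          rw [← mul_sum]; gcongr
      _ ≤ 4 * L * L' * M ^ N * (N.factorial : ℝ) := by
          have : 0 ≤ L * L' * M ^ N * (N.factorial : ℝ) := by positivity
          linarith
  · have key : f * g - ∑ n ∈ range N, ((coeff n (A * B) : ℚ) : ℂ) * w ^ n =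
        f * (g - ∑ n ∈ range N, ((coeff n B : ℚ) : ℂ) * w ^ n) +
          ∑ n ∈ range N, ((coeff n B : ℚ) : ℂ) * w ^ n *
            (f - ∑ i ∈ range (N - n), ((coeff i A : ℚ) : ℂ) * w ^ i) := by
      have h1 : ∑ n ∈ range N, ((coeff n (A * B) : ℚ) : ℂ) * w ^ n =
          ∑ n ∈ range N, ∑ i ∈ range (N - n),
            ((coeff n B : ℚ) : ℂ) * w ^ n * (((coeff i A : ℚ) : ℂ) * w ^ i) := by
        rw [← sum_range_diag_flip N
          fun n i => ((coeff n B : ℚ) : ℂ) * w ^ n * (((coeff i A : ℚ) : ℂ) * w ^ i)]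
        refine sum_congr rfl fun n _ => ?_
        rw [mul_comm A B, coeff_mul, Nat.sum_antidiagonal_eq_sum_range_succ_mk]
        push_cast
        rw [sum_mul]
        refine sum_congr rfl fun k hk => ?_
        have hk' : k + (n - k) = n := by have := mem_range.1 hk; omega
        calc _ = ((coeff k B : ℚ) : ℂ) * ((coeff (n - k) A : ℚ) : ℂ) * w ^ (k + (n - k)) := by
              rw [hk']
          _ = _ := by rw [pow_add]; ring
      simp only [mul_sub, sum_sub_distrib, mul_sum]
      have : ∑ n ∈ range N, f * (((coeff n B : ℚ) : ℂ) * w ^ n) =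
          ∑ n ∈ range N, ((coeff n B : ℚ) : ℂ) * w ^ n * f := sum_congr rfl fun _ _ => mul_comm _ _
      rw [h1, this]
      ring
    have hf0 : ‖f‖ ≤ L := by simpa using (hf 0).2
    rw [key]
    calc _ ≤ ‖f * (g - ∑ n ∈ range N, ((coeff n B : ℚ) : ℂ) * w ^ n)‖ +
          ∑ n ∈ range N, ‖((coeff n B : ℚ) : ℂ) * w ^ n *
            (f - ∑ i ∈ range (N - n), ((coeff i A : ℚ) : ℂ) * w ^ i)‖ :=
          (norm_add_le _ _).trans (by gcongr; exact norm_sum_le _ _)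
      _ ≤ L * (L' * M ^ N * (N.factorial : ℝ) * ‖w‖ ^ N) +
          ∑ n ∈ range N, L * L' * M ^ N * ‖w‖ ^ N *
            ((n.factorial : ℝ) * ((N - n).factorial : ℝ)) := by
          refine add_le_add ?_ (sum_le_sum fun n hn => ?_)
          · rw [norm_mul]
            exact mul_le_mul hf0 (hg N).2 (norm_nonneg _) hL
          · have hn' : n + (N - n) = N := by have := mem_range.1 hn; omega
            have hB : ‖((coeff n B : ℚ) : ℂ)‖ ≤ L' * M ^ n * (n.factorial : ℝ) := by
              have := (hg n).1
              rwa [← Complex.ofReal_ratCast, Complex.norm_real, Real.norm_eq_abs]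
            rw [norm_mul, norm_mul, norm_pow]
            calc _ ≤ (L' * M ^ n * (n.factorial : ℝ) * ‖w‖ ^ n) *
                  (L * M ^ (N - n) * ((N - n).factorial : ℝ) * ‖w‖ ^ (N - n)) := by
                  gcongr
                  exact (hf (N - n)).2
              _ = L * L' * M ^ (n + (N - n)) * ‖w‖ ^ (n + (N - n)) *
                  ((n.factorial : ℝ) * ((N - n).factorial : ℝ)) := by
                  rw [pow_add, pow_add]; ring
              _ = _ := by rw [hn']
      _ ≤ L * (L' * M ^ N * (N.factorial : ℝ) * ‖w‖ ^ N) +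
          L * L' * M ^ N * ‖w‖ ^ N * (3 * (N.factorial : ℝ)) := by
          rw [← mul_sum]
          gcongr
          refine le_trans ?_ hsum
          rw [sum_range_succ]
          exact le_add_of_nonneg_right (by positivity)
      _ = 4 * L * L' * M ^ N * (N.factorial : ℝ) * ‖w‖ ^ N := by ring

theorem one (w : ℂ) {M : ℝ} (hM : 0 ≤ M) : IsGevreyExpansionAt 1 1 w 1 M := by
  intro N
  rcases N with _ | N
  · simp
  · constructor
    · simp only [coeff_one, Nat.add_eq_zero_iff, one_ne_zero, and_false, if_false, Rat.cast_zero,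
        abs_zero]
      positivity
    · rw [sum_range_succ']
      simp only [coeff_one, Nat.add_eq_zero_iff, one_ne_zero, and_false, if_false, Rat.cast_zero,
        zero_mul, sum_const_zero, if_true, Rat.cast_one, pow_zero, mul_one, zero_add, sub_self,
        norm_zero]
      positivity

theorem pow {A : PowerSeries ℚ} {f w : ℂ} {L M : ℝ} (hL : 0 ≤ L) (hM : 0 ≤ M)
    (hf : IsGevreyExpansionAt A f w L M) (k : ℕ) :
    IsGevreyExpansionAt (A ^ k) (f ^ k) w ((4 * L) ^ k) M := by
  induction k with
  | zero => simpa using one w hM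
  | succ k ih =>
    have := ih.mul (by positivity) hL hM hf
    rw [pow_succ, pow_succ, pow_succ]
    convert this using 1
    ring

/-- Exponentiation preserves `1`-Gevrey expansions without constant term. -/
theorem norm_exp_sub_le {A : PowerSeries ℚ} (hA : constantCoeff A = 0) {f w : ℂ} {L M : ℝ}
    (hL : 0 ≤ L) (hM : 0 ≤ M) (hf : IsGevreyExpansionAt A f w L M) (N : ℕ) :
    ‖Complex.exp f - ∑ n ∈ range N,
        ((∑ k ∈ range (n + 1), coeff n (A ^ k) / (k.factorial : ℚ) : ℚ) : ℂ) * w ^ n‖ ≤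
      Real.exp (4 * L) * M ^ N * (N.factorial : ℝ) * ‖w‖ ^ N := by
  have hcoeff : ∀ n k, n < k → coeff n (A ^ k) = 0 := fun n k hnk =>
    X_pow_dvd_iff.1 (pow_dvd_pow_of_dvd (X_dvd_iff.2 hA) k) n hnk
  have h1 : HasSum (fun k : ℕ => f ^ k / (k.factorial : ℂ)) (Complex.exp f) := by
    rw [Complex.exp_eq_exp_ℂ]
    exact NormedSpace.expSeries_div_hasSum_exp f
  have h1' : HasSum (fun k : ℕ => (4 * L) ^ k / (k.factorial : ℝ)) (Real.exp (4 * L)) := by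
    rw [Real.exp_eq_exp_ℝ]
    exact NormedSpace.expSeries_div_hasSum_exp (4 * L)
  have h2 : HasSum
      (fun k : ℕ => (∑ n ∈ range N, ((coeff n (A ^ k) : ℚ) : ℂ) * w ^ n) / (k.factorial : ℂ))
      (∑ n ∈ range N,
        ((∑ k ∈ range (n + 1), coeff n (A ^ k) / (k.factorial : ℚ) : ℚ) : ℂ) * w ^ n) := by
    simp only [sum_div]
    refine hasSum_sum fun n _ => ?_
    push_cast
    rw [sum_mul]
    have : ∀ k : ℕ, ((coeff n (A ^ k) : ℚ) : ℂ) * w ^ n / (k.factorial : ℂ) =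
        ((coeff n (A ^ k) : ℚ) : ℂ) / (k.factorial : ℂ) * w ^ n := fun k => by ring
    simp only [this]
    refine hasSum_sum_of_ne_finset_zero fun k hk => ?_
    rw [hcoeff n k (by simpa [Nat.lt_succ_iff] using hk)]
    simp
  have h3 := h1'.mul_right (M ^ N * (N.factorial : ℝ) * ‖w‖ ^ N)
  have := (h1.sub h2).norm_le_of_bounded h3 fun k => by
    rw [← sub_div, norm_div, Complex.norm_natCast]
    calc _ ≤ ((4 * L) ^ k * M ^ N * (N.factorial : ℝ) * ‖w‖ ^ N) / (k.factorial : ℝ) := by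
          gcongr
          exact (hf.pow hL hM k N).2
      _ = _ := by ring
  simpa only [mul_assoc] using this

end IsGevreyExpansionAt

section Segments

open MeasureTheory intervalIntegral Set

theorem abs_bernoulliFun_le_factorial (n : ℕ) {x : ℝ} (hx : x ∈ Icc (0 : ℝ) 1) :
    |bernoulliFun n x| ≤ n.factorial := by
  induction n generalizing x with
  | zero => simp
  | succ n ih =>
    have hlip : ∀ y ∈ Icc (0 : ℝ) 1,
        ‖bernoulliFun (n + 1) x - bernoulliFun (n + 1) y‖ ≤ (n + 1).factorial := by
      intro y hy
      have := (convex_Icc (0 : ℝ) 1).norm_image_sub_le_of_norm_hasDerivWithin_le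
        (f := bernoulliFun (n + 1)) (f' := fun t => ((n + 1 : ℕ) : ℝ) * bernoulliFun n t)
        (C := (n + 1).factorial)
        (fun t _ => (hasDerivAt_bernoulliFun (n + 1) t).hasDerivWithinAt)
        (fun t ht => by
          rw [norm_mul, Real.norm_natCast, Nat.factorial_succ, Nat.cast_mul]
          gcongr
          exact ih ht) hy hx
      refine this.trans (mul_le_of_le_one_right (by positivity) ?_)
      rw [Real.norm_eq_abs, abs_le]
      constructor <;> linarith [hx.1, hx.2, hy.1, hy.2]
    have hint : ∫ y in (0 : ℝ)..1, (bernoulliFun (n + 1) x - bernoulliFun (n + 1) y) =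
        bernoulliFun (n + 1) x := by
      rw [integral_sub (by simp) (intervalIntegrable_bernoulliFun _ _ _),
        integral_bernoulliFun_eq_zero n.succ_ne_zero]
      simp
    rw [← hint, ← Real.norm_eq_abs]
    refine (norm_integral_le_of_norm_le_const fun y hy => hlip y ?_).trans (by simp)
    rw [uIoc_of_le zero_le_one] at hy
    exact Ioc_subset_Icc_self hy

/-- The coefficients `B_{n+1} / (n (n + 1))` of the Stirling series (with value `0` at `n = 0`). -/
def stirlingCoeff (n : ℕ) : ℚ := bernoulli (n + 1) / (n * (n + 1))

theorem abs_stirlingCoeff_le (n : ℕ) : |(stirlingCoeff n : ℝ)| ≤ n.factorial := by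
  rcases Nat.eq_zero_or_pos n with rfl | hn
  · simp [stirlingCoeff]
  have h := abs_bernoulliFun_le_factorial (n + 1) (x := 0) (by simp)
  rw [bernoulliFun_eval_zero, Nat.factorial_succ] at h
  push_cast at h
  have hn1 : (1 : ℝ) ≤ n := by exact_mod_cast hn
  rw [stirlingCoeff]
  push_cast
  rw [abs_div, abs_of_nonneg (by positivity : (0 : ℝ) ≤ n * (n + 1)), div_le_iff₀ (by positivity)]
  refine h.trans ?_
  have : (0 : ℝ) ≤ (n.factorial : ℝ) * (n + 1) := by positivity
  nlinarith

/-- The contribution of the unit segment `[z, z + 1]` to the Euler–Maclaurin remainder of order `n`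
in Stirling's formula. -/
noncomputable def stirlingSegment (n : ℕ) (z : ℂ) : ℂ :=
  (n : ℂ)⁻¹ * ∫ t in (0 : ℝ)..1, (bernoulliFun n t : ℂ) / (z + t) ^ n

theorem Complex.add_ofReal_mem_slitPlane {z : ℂ} (hz : z ∈ slitPlane) {t : ℝ} (ht : 0 ≤ t) :
    z + t ∈ slitPlane := by
  rw [mem_slitPlane_iff] at hz ⊢
  simp only [add_re, ofReal_re, add_im, ofReal_im, add_zero]
  rcases hz with h | h
  · left; linarith
  · right; exact h

theorem Complex.add_natCast_mem_slitPlane {z : ℂ} (hz : z ∈ slitPlane) (k : ℕ) :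
    z + k ∈ slitPlane := by
  simpa using add_ofReal_mem_slitPlane hz k.cast_nonneg

theorem continuousOn_bernoulliFun_div_pow (m n : ℕ) {z : ℂ} (hz : z ∈ Complex.slitPlane) :
    ContinuousOn (fun t : ℝ => (bernoulliFun m t : ℂ) / (z + t) ^ n) (uIcc 0 1) := by
  refine ContinuousOn.div ?_ ?_ fun t ht => ?_
  · exact (Complex.continuous_ofReal.comp (continuous_bernoulliFun m)).continuousOn
  · fun_prop
  · rw [uIcc_of_le zero_le_one] at ht
    exact pow_ne_zero _ (Complex.slitPlane_ne_zero (Complex.add_ofReal_mem_slitPlane hz ht.1))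

theorem stirlingSegment_eq_add_succ {n : ℕ} (hn : n ≠ 0) {z : ℂ} (hz : z ∈ Complex.slitPlane) :
    stirlingSegment n z =
      stirlingCoeff n * (((z + 1) ^ n)⁻¹ - (z ^ n)⁻¹) + stirlingSegment (n + 1) z := by
  have hne : ∀ t ∈ uIcc (0 : ℝ) 1, z + t ≠ 0 := fun t ht => by
    rw [uIcc_of_le zero_le_one] at ht
    exact Complex.slitPlane_ne_zero (Complex.add_ofReal_mem_slitPlane hz ht.1)
  have hn' : (n : ℂ) ≠ 0 := by exact_mod_cast hn
  have hn1 : (n : ℂ) + 1 ≠ 0 := by exact_mod_cast n.succ_ne_zero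
  have hu : ∀ t ∈ uIcc (0 : ℝ) 1, HasDerivAt (fun t : ℝ => ((z + t) ^ n)⁻¹)
      (-(n : ℂ) / (z + t) ^ (n + 1)) t := fun t ht => by
    have h1 : HasDerivAt (fun t : ℝ => z + (t : ℂ)) 1 t := by
      simpa using (Complex.ofRealCLM.hasDerivAt (x := t)).const_add z
    refine ((h1.pow n).inv (pow_ne_zero n (hne t ht))).congr_deriv ?_
    obtain ⟨m, rfl⟩ := Nat.exists_eq_succ_of_ne_zero hn
    have := hne t ht
    simp only [Nat.succ_eq_add_one, Nat.add_sub_cancel, Pi.pow_apply]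
    field_simp
    ring
  have hv : ∀ t ∈ uIcc (0 : ℝ) 1,
      HasDerivAt (fun t : ℝ => ((bernoulliFun (n + 1) t / (n + 1) : ℝ) : ℂ))
        (bernoulliFun n t : ℂ) t :=
    fun t _ => (antideriv_bernoulliFun n t).ofReal_comp
  have hibp := intervalIntegral.integral_mul_deriv_eq_deriv_mul hu hv
    (ContinuousOn.intervalIntegrable (by
      refine ContinuousOn.div (by fun_prop) (by fun_prop) fun t ht => pow_ne_zero _ (hne t ht)))
    ((Complex.continuous_ofReal.comp (continuous_bernoulliFun n)).intervalIntegrable _ _)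
  have e1 : ∫ t in (0 : ℝ)..1, (bernoulliFun n t : ℂ) / (z + t) ^ n =
      ∫ t in (0 : ℝ)..1, ((z + t) ^ n)⁻¹ * (bernoulliFun n t : ℂ) := by
    simp only [div_eq_mul_inv, mul_comm]
  have e2 : ∫ t in (0 : ℝ)..1, -(n : ℂ) / (z + t) ^ (n + 1) *
      ((bernoulliFun (n + 1) t / (n + 1) : ℝ) : ℂ) =
      -(n / (n + 1)) * ∫ t in (0 : ℝ)..1, (bernoulliFun (n + 1) t : ℂ) / (z + t) ^ (n + 1) := by
    rw [← intervalIntegral.integral_const_mul]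
    refine integral_congr fun t _ => ?_
    push_cast
    ring
  rw [stirlingSegment, stirlingSegment, e1, hibp, e2,
    bernoulliFun_endpoints_eq_of_ne_one (by omega), bernoulliFun_eval_zero, stirlingCoeff]
  push_cast
  rw [add_zero]
  field_simp
  ring

theorem stirlingSegment_one {z : ℂ} (hz : z ∈ Complex.slitPlane) :
    stirlingSegment 1 z = 1 - (z + 1 / 2) * (Complex.log (z + 1) - Complex.log z) := by
  have hmem : ∀ t ∈ uIcc (0 : ℝ) 1, z + t ∈ Complex.slitPlane := fun t ht => by
    rw [uIcc_of_le zero_le_one] at ht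
    exact Complex.add_ofReal_mem_slitPlane hz ht.1
  have hd : ∀ t ∈ uIcc (0 : ℝ) 1,
      HasDerivAt (fun t : ℝ => (t : ℂ) - (z + 1 / 2) * Complex.log (z + t))
        ((bernoulliFun 1 t : ℂ) / (z + t) ^ 1) t := fun t ht => by
    have h0 : HasDerivAt (fun t : ℝ => (t : ℂ)) 1 t := Complex.ofRealCLM.hasDerivAt
    have h1 := h0.const_add z
    refine (h0.sub ((h1.clog_real (hmem t ht)).const_mul (z + 1 / 2))).congr_deriv ?_
    have := Complex.slitPlane_ne_zero (hmem t ht)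
    rw [bernoulliFun_one]
    push_cast
    field_simp
    ring
  rw [stirlingSegment, integral_eq_sub_of_hasDerivAt hd
    (continuousOn_bernoulliFun_div_pow 1 1 hz).intervalIntegrable]
  simp
  ring

theorem norm_stirlingSegment_le (n : ℕ) {z : ℂ} {r : ℝ} (hr : 0 < r)
    (h : ∀ t ∈ Icc (0 : ℝ) 1, r ≤ ‖z + t‖) :
    ‖stirlingSegment (n + 1) z‖ ≤ n.factorial / r ^ (n + 1) := by
  have hb : ∀ t ∈ uIoc (0 : ℝ) 1, ‖(bernoulliFun (n + 1) t : ℂ) / (z + t) ^ (n + 1)‖ ≤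
      (n + 1).factorial / r ^ (n + 1) := fun t ht => by
    rw [uIoc_of_le zero_le_one] at ht
    have ht' := Ioc_subset_Icc_self ht
    rw [norm_div, norm_pow, Complex.norm_real, Real.norm_eq_abs]
    gcongr
    · exact abs_bernoulliFun_le_factorial _ ht'
    · exact h t ht'
  have h1 := norm_integral_le_of_norm_le_const hb
  rw [stirlingSegment, norm_mul, norm_inv, Complex.norm_natCast]
  calc _ ≤ ((n + 1 : ℕ) : ℝ)⁻¹ * ((n + 1).factorial / r ^ (n + 1) * |1 - 0|) := by gcongr
    _ = _ := by
      rw [Nat.factorial_succ]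
      push_cast
      simp only [sub_zero, abs_one, mul_one]
      field_simp

end Segments

/-- The normalized Gamma function `(2π)^{-1/2} z^{1/2-z} e^z Γ(z)`. -/
noncomputable def normalizedGamma (z : ℂ) : ℂ :=
  (Real.sqrt (2 * Real.pi) : ℂ)⁻¹ *
    Complex.exp ((1 / 2 - z) * Complex.log z + z) * Complex.Gamma z

theorem normalizedGamma_eq_exp_mul_add_one {z : ℂ} (hz : z ∈ Complex.slitPlane) :
    normalizedGamma z = Complex.exp (-stirlingSegment 1 z) * normalizedGamma (z + 1) := by
  have hz0 := Complex.slitPlane_ne_zero hz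
  have h : Complex.exp ((1 / 2 - z) * Complex.log z + z) =
      Complex.exp (-stirlingSegment 1 z) *
        Complex.exp ((1 / 2 - (z + 1)) * Complex.log (z + 1) + (z + 1)) * z := by
    calc _ = Complex.exp (-stirlingSegment 1 z) *
          Complex.exp ((1 / 2 - (z + 1)) * Complex.log (z + 1) + (z + 1)) *
            Complex.exp (Complex.log z) := by
          rw [← Complex.exp_add, ← Complex.exp_add, stirlingSegment_one hz]
          congr 1
          ring
      _ = _ := by rw [Complex.exp_log hz0]
  rw [normalizedGamma, normalizedGamma, Complex.Gamma_add_one z hz0, h]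
  ring

theorem normalizedGamma_eq_exp_sum_mul {z : ℂ} (hz : z ∈ Complex.slitPlane) (K : ℕ) :
    normalizedGamma z =
      Complex.exp (-∑ k ∈ Finset.range K, stirlingSegment 1 (z + k)) * normalizedGamma (z + K) := by
  induction K with
  | zero => simp
  | succ K ih =>
    rw [ih, normalizedGamma_eq_exp_mul_add_one (Complex.add_natCast_mem_slitPlane hz K),
      Finset.sum_range_succ, neg_add, Complex.exp_add, mul_assoc, Nat.cast_succ, add_assoc z]

theorem Complex.Gamma_add_nat_eq_mul_prod {z : ℂ} (hz : ∀ k : ℕ, z + k ≠ 0) (K : ℕ) :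
    Gamma (z + K) = Gamma z * ∏ j ∈ Finset.range K, (z + j) := by
  induction K with
  | zero => simp
  | succ K ih =>
    rw [Nat.cast_succ, ← add_assoc, Gamma_add_one _ (hz K), ih, Finset.prod_range_succ]
    ring

theorem Complex.log_add_natCast_eq {z : ℂ} {K : ℕ} (hK : K ≠ 0) (hz : z + K ≠ 0) :
    log (z + K) = log K + log (1 + z / K) := by
  have hK' : (K : ℂ) ≠ 0 := by exact_mod_cast hK
  have h : z + K = ((K : ℝ) : ℂ) * (1 + z / K) := by
    push_cast
    field_simp
    ring
  have h1 : 1 + z / K ≠ 0 := by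
    rintro h0
    exact hz (by rw [h, h0, mul_zero])
  rw [h, log_ofReal_mul (by exact_mod_cast Nat.pos_of_ne_zero hK) h1, natCast_log]

theorem normalizedGamma_add_natCast_eq {z : ℂ} (hz : z ∈ Complex.slitPlane) {K : ℕ} (hK : K ≠ 0)
    (hG : Complex.GammaSeq z K ≠ 0) :
    normalizedGamma (z + K) =
      (Complex.Gamma z / Complex.GammaSeq z K) *
        (((Stirling.stirlingSeq K / Real.sqrt Real.pi : ℝ) : ℂ) *
          Complex.exp (z - (K * Complex.log (1 + z / K) +
            (z + 1 / 2) * Complex.log (1 + z / K)))) := by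
  have hne : ∀ k : ℕ, z + k ≠ 0 := fun k =>
    Complex.slitPlane_ne_zero (Complex.add_natCast_mem_slitPlane hz k)
  have hK' : (K : ℂ) ≠ 0 := by exact_mod_cast hK
  have hKr : (0 : ℝ) < K := by exact_mod_cast Nat.pos_of_ne_zero hK
  have hprod : ∏ j ∈ Finset.range K, (z + j) ≠ 0 := Finset.prod_ne_zero_iff.2 fun j _ => hne j
  have hfac : (K.factorial : ℂ) ≠ 0 := by exact_mod_cast K.factorial_ne_zero
  have hGamma : Complex.Gamma (z + K) = Complex.Gamma z / Complex.GammaSeq z K *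
      ((K : ℂ) ^ z * K.factorial / (z + K)) := by
    rw [Complex.Gamma_add_nat_eq_mul_prod hne, div_mul_eq_mul_div, eq_div_iff hG, mul_assoc]
    congr 1
    rw [Complex.GammaSeq, Finset.prod_range_succ]
    field_simp [hne K]
  have hsq : Real.sqrt (2 * K) = Real.sqrt 2 * Real.sqrt K := Real.sqrt_mul (by norm_num) _
  have hsqpi : Real.sqrt (2 * Real.pi) = Real.sqrt 2 * Real.sqrt Real.pi :=
    Real.sqrt_mul (by norm_num) _
  have hfact : ((K.factorial : ℝ) : ℂ) =
      ((Stirling.stirlingSeq K * (Real.sqrt 2 * Real.sqrt K) * (K / Real.exp 1) ^ K : ℝ) : ℂ) := by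
    rw [Stirling.stirlingSeq, hsq]
    congr 1
    have : (K / Real.exp 1) ^ K ≠ 0 := by positivity
    field_simp
  have hexpK : (((K / Real.exp 1) ^ K : ℝ) : ℂ) = Complex.exp (K * Complex.log K - K) := by
    rw [Complex.exp_sub, Complex.exp_nat_mul, Complex.exp_log hK', div_pow,
      ← Real.exp_nat_mul]
    push_cast
    simp
  have hsqrtK : ((Real.sqrt K : ℝ) : ℂ) = Complex.exp (Complex.log K / 2) := by
    rw [← Complex.natCast_log, Real.sqrt_eq_rpow, Real.rpow_def_of_pos hKr]
    push_cast
    congr 1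
    ring
  have hexp : Complex.exp ((1 / 2 - (z + K)) * Complex.log (z + K) + (z + K)) *
      ((K : ℂ) ^ z * (Complex.exp (Complex.log K / 2) * Complex.exp (K * Complex.log K - K))
        / (z + K)) =
      Complex.exp (z - (K * Complex.log (1 + z / K) +
            (z + 1 / 2) * Complex.log (1 + z / K))) := by
    calc _ = Complex.exp ((1 / 2 - (z + K)) * Complex.log (z + K) + (z + K)) *
          ((K : ℂ) ^ z * (Complex.exp (Complex.log K / 2) * Complex.exp (K * Complex.log K - K))
            / Complex.exp (Complex.log (z + K))) := by rw [Complex.exp_log (hne K)]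
      _ = _ := by
          rw [Complex.cpow_def_of_ne_zero hK', ← Complex.exp_add, ← Complex.exp_add,
            ← Complex.exp_sub, ← Complex.exp_add, Complex.log_add_natCast_eq hK (hne K)]
          congr 1
          ring
  have h2 : ((Real.sqrt 2 : ℝ) : ℂ) ≠ 0 := by
    exact_mod_cast (Real.sqrt_pos.2 (by norm_num : (0 : ℝ) < 2)).ne'
  have hpi : ((Real.sqrt Real.pi : ℝ) : ℂ) ≠ 0 := by
    exact_mod_cast (Real.sqrt_pos.2 Real.pi_pos).ne'
  rw [← hexp, ← hexpK, ← hsqrtK, normalizedGamma, hGamma, ← Complex.ofReal_natCast K.factorial,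
    hfact, hsqpi]
  generalize Complex.exp ((1 / 2 - (z + K)) * Complex.log (z + K) + (z + K)) = E
  push_cast
  have := hne K
  field_simp

open Filter Topology in
theorem tendsto_normalizedGamma_add_natCast {z : ℂ} (hz : z ∈ Complex.slitPlane) :
    Tendsto (fun K : ℕ => normalizedGamma (z + K)) atTop (𝓝 1) := by
  have hG : Complex.Gamma z ≠ 0 := Complex.Gamma_ne_zero fun m hm =>
    Complex.slitPlane_ne_zero (Complex.add_natCast_mem_slitPlane hz m) (by rw [hm]; simp)
  have hseq := Complex.GammaSeq_tendsto_Gamma z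
  have h1 : Tendsto (fun K : ℕ => Complex.Gamma z / Complex.GammaSeq z K) atTop (𝓝 1) := by
    simpa [div_self hG, Pi.div_def] using tendsto_const_nhds (x := Complex.Gamma z) |>.div hseq hG
  have h2 : Tendsto (fun K : ℕ => ((Stirling.stirlingSeq K / Real.sqrt Real.pi : ℝ) : ℂ))
      atTop (𝓝 1) := by
    have := Stirling.tendsto_stirlingSeq_sqrt_pi.div_const (Real.sqrt Real.pi)
    rw [div_self (Real.sqrt_pos.2 Real.pi_pos).ne'] at this
    exact_mod_cast (Complex.continuous_ofReal.tendsto 1).comp this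
  have hdiv : Tendsto (fun K : ℕ => z / (K : ℂ)) atTop (𝓝 0) :=
    tendsto_const_div_atTop_nhds_zero_nat z
  have h3 : Tendsto (fun K : ℕ => (K : ℂ) * Complex.log (1 + z / K)) atTop (𝓝 z) := by
    refine Complex.tendsto_nat_mul_log_one_add_of_tendsto ?_
    refine tendsto_const_nhds.congr' ?_
    filter_upwards [eventually_ne_atTop 0] with K hK
    have : (K : ℂ) ≠ 0 := by exact_mod_cast hK
    field_simp
  have h4 : Tendsto (fun K : ℕ => Complex.log (1 + z / K)) atTop (𝓝 0) := by
    have h : Tendsto (fun K : ℕ => 1 + z / (K : ℂ)) atTop (𝓝 1) := by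
      simpa using hdiv.const_add 1
    have hc := (continuousAt_clog (x := 1) (by simp)).tendsto.comp h
    simpa [Function.comp_def] using hc
  have h5 : Tendsto (fun K : ℕ => Complex.exp (z - (K * Complex.log (1 + z / K) +
            (z + 1 / 2) * Complex.log (1 + z / K)))) atTop (𝓝 1) := by
    have h := (h3.add (h4.const_mul (z + 1 / 2))).const_sub z
    have := (Complex.continuous_exp.tendsto _).comp h
    simpa [Function.comp_def] using this
  have h6 := h1.mul (h2.mul h5)
  rw [one_mul, one_mul] at h6
  refine h6.congr' ?_
  filter_upwards [eventually_ne_atTop 0, hseq.eventually_ne hG] with K hK hGK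
  exact (normalizedGamma_add_natCast_eq hz hK hGK).symm

open Real in
theorem Complex.sqrt_mul_norm_add_le_norm_add {z : ℂ} {β : ℝ} (hβ : β ≤ π) (hz : |arg z| ≤ β)
    {s : ℝ} (hs : 0 ≤ s) : √((1 + Real.cos β) / 2) * (‖z‖ + s) ≤ ‖z + s‖ := by
  have hcos : Real.cos β ≤ Real.cos (arg z) := by
    rw [← Real.cos_abs (arg z)]
    exact Real.cos_le_cos_of_nonneg_of_le_pi (abs_nonneg _) hβ hz
  have h0 : 0 ≤ (1 + Real.cos β) / 2 := by linarith [Real.neg_one_le_cos β]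
  refine (sq_le_sq₀ (by positivity) (norm_nonneg _)).1 ?_
  have h1 : ‖z + s‖ ^ 2 = ‖z‖ ^ 2 + 2 * s * z.re + s ^ 2 := by
    rw [Complex.sq_norm, Complex.sq_norm, normSq_apply, normSq_apply]
    simp only [add_re, ofReal_re, add_im, ofReal_im, add_zero]
    ring
  rw [mul_pow, Real.sq_sqrt h0, h1, ← norm_mul_cos_arg z]
  have h2 : 0 ≤ s * ‖z‖ * (Real.cos (arg z) - Real.cos β) :=
    mul_nonneg (by positivity) (by linarith)
  nlinarith [mul_nonneg (sub_nonneg.2 (Real.cos_le_one β)) (sq_nonneg (‖z‖ - s))]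

open Filter Topology in
theorem hasSum_one_div_add_sub_one_div_add_succ {r : ℝ} (hr : 0 < r) :
    HasSum (fun k : ℕ => 1 / (r + k) - 1 / (r + (k + 1))) (1 / r) := by
  rw [hasSum_iff_tendsto_nat_of_nonneg fun k => by
    rw [sub_nonneg]
    exact one_div_le_one_div_of_le (by positivity) (by linarith)]
  have h : ∀ K : ℕ, ∑ k ∈ Finset.range K, (1 / (r + k) - 1 / (r + (k + 1))) =
      1 / r - 1 / (r + K) := fun K => by
    have := Finset.sum_range_sub' (fun k : ℕ => 1 / (r + k)) K
    simpa using this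
  simp only [h]
  have : Tendsto (fun K : ℕ => 1 / (r + K)) atTop (𝓝 0) :=
    tendsto_const_nhds.div_atTop (tendsto_atTop_add_const_left _ _ tendsto_natCast_atTop_atTop)
  simpa using this.const_sub (1 / r)

section Sector

variable {z : ℂ} {δ : ℝ}

theorem norm_stirlingSegment_add_natCast_le (hz : z ≠ 0) (hδ : 0 < δ)
    (h : ∀ s : ℝ, 0 ≤ s → δ * (‖z‖ + s) ≤ ‖z + s‖) (n k : ℕ) :
    ‖stirlingSegment (n + 2) (z + k)‖ ≤
      (n + 1).factorial / δ ^ (n + 2) * (1 + ‖z‖⁻¹) * ‖z‖⁻¹ ^ n *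
        (1 / (‖z‖ + k) - 1 / (‖z‖ + (k + 1))) := by
  have hr : 0 < ‖z‖ := norm_pos_iff.2 hz
  have hrk : 0 < ‖z‖ + k := by positivity
  refine (norm_stirlingSegment_le (n + 1) (r := δ * (‖z‖ + k)) (by positivity)
    fun t ht => ?_).trans ?_
  · calc δ * (‖z‖ + k) ≤ δ * (‖z‖ + (k + t : ℝ)) := by
          gcongr
          linarith [ht.1]
      _ ≤ _ := h _ (by linarith [ht.1, (Nat.cast_nonneg k : (0 : ℝ) ≤ k)])
      _ = _ := by push_cast; rw [add_assoc]
  · have h1 : (‖z‖ + k)⁻¹ ^ n ≤ ‖z‖⁻¹ ^ n := by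
      gcongr
      linarith [(Nat.cast_nonneg k : (0 : ℝ) ≤ k)]
    have h2 : (‖z‖ + k)⁻¹ ^ 2 ≤ (1 + ‖z‖⁻¹) * (1 / (‖z‖ + k) - 1 / (‖z‖ + (k + 1))) := by
      have e : 1 / (‖z‖ + k) - 1 / (‖z‖ + (k + 1)) = (‖z‖ + k)⁻¹ * (‖z‖ + (k + 1))⁻¹ := by
        have : ‖z‖ + (k + 1) ≠ 0 := by positivity
        field_simp
        ring
      have h3 : (‖z‖ + k)⁻¹ ≤ (1 + ‖z‖⁻¹) * (‖z‖ + (k + 1))⁻¹ := by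
        rw [← div_eq_mul_inv, le_div_iff₀ (by positivity), inv_mul_le_iff₀ hrk]
        have : ‖z‖ * ‖z‖⁻¹ = 1 := mul_inv_cancel₀ hr.ne'
        have : 0 ≤ (k : ℝ) * ‖z‖⁻¹ := by positivity
        nlinarith
      rw [e, sq]
      calc _ ≤ (‖z‖ + k)⁻¹ * ((1 + ‖z‖⁻¹) * (‖z‖ + (k + 1))⁻¹) := by gcongr
        _ = _ := by ring
    calc _ = (n + 1).factorial / δ ^ (n + 2) * ((‖z‖ + k)⁻¹ ^ n * (‖z‖ + k)⁻¹ ^ 2) := by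
          rw [← pow_add, mul_pow, inv_pow]
          field_simp
      _ ≤ (n + 1).factorial / δ ^ (n + 2) *
          (‖z‖⁻¹ ^ n * ((1 + ‖z‖⁻¹) * (1 / (‖z‖ + k) - 1 / (‖z‖ + (k + 1))))) := by gcongr
      _ = _ := by ring

theorem summable_stirlingSegment (hz : z ≠ 0) (hδ : 0 < δ)
    (h : ∀ s : ℝ, 0 ≤ s → δ * (‖z‖ + s) ≤ ‖z + s‖) (n : ℕ) :
    Summable fun k : ℕ => stirlingSegment (n + 2) (z + k) :=
  Summable.of_norm_bounded
    ((hasSum_one_div_add_sub_one_div_add_succ (norm_pos_iff.2 hz)).summable.mul_left _)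
    (norm_stirlingSegment_add_natCast_le hz hδ h n)

theorem norm_tsum_stirlingSegment_le (hz : z ≠ 0) (hδ : 0 < δ)
    (h : ∀ s : ℝ, 0 ≤ s → δ * (‖z‖ + s) ≤ ‖z + s‖) (n : ℕ) :
    ‖∑' k : ℕ, stirlingSegment (n + 2) (z + k)‖ ≤
      (n + 1).factorial / δ ^ (n + 2) * (1 + ‖z‖⁻¹) * ‖z‖⁻¹ ^ (n + 1) := by
  refine (tsum_of_norm_bounded
    ((hasSum_one_div_add_sub_one_div_add_succ (norm_pos_iff.2 hz)).mul_left _)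
    (norm_stirlingSegment_add_natCast_le hz hδ h n)).trans_eq ?_
  rw [pow_succ, one_div]
  ring

open Filter Topology in
theorem tendsto_inv_add_natCast_pow (z : ℂ) {n : ℕ} (hn : n ≠ 0) :
    Tendsto (fun K : ℕ => ((z + K) ^ n)⁻¹) atTop (𝓝 0) := by
  have h1 : Tendsto (fun K : ℕ => z + (K : ℂ)) atTop (Bornology.cobounded ℂ) :=
    (tendsto_const_add_cobounded z).comp (tendsto_natCast_atTop_cobounded)
  have h2 := ((tendsto_inv₀_cobounded (α := ℂ)).comp h1).pow n
  rw [zero_pow hn] at h2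
  simpa [Function.comp_def, inv_pow] using h2

theorem sum_stirlingSegment_eq (hz : z ∈ Complex.slitPlane) {n : ℕ} (hn : n ≠ 0) (K : ℕ) :
    ∑ k ∈ Finset.range K, stirlingSegment n (z + k) =
      stirlingCoeff n * (((z + K) ^ n)⁻¹ - (z ^ n)⁻¹) +
        ∑ k ∈ Finset.range K, stirlingSegment (n + 1) (z + k) := by
  have h := Finset.sum_range_sub (fun k : ℕ => ((z + k) ^ n)⁻¹) K
  simp only [Nat.cast_zero, add_zero] at h
  rw [← h, Finset.mul_sum, ← Finset.sum_add_distrib]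
  refine Finset.sum_congr rfl fun k _ => ?_
  rw [stirlingSegment_eq_add_succ hn (Complex.add_natCast_mem_slitPlane hz k), Nat.cast_succ,
    add_assoc z]

theorem tsum_stirlingSegment_eq (hz : z ∈ Complex.slitPlane) (hδ : 0 < δ)
    (h : ∀ s : ℝ, 0 ≤ s → δ * (‖z‖ + s) ≤ ‖z + s‖) (n : ℕ) :
    ∑' k : ℕ, stirlingSegment (n + 2) (z + k) =
      -(stirlingCoeff (n + 2) * z⁻¹ ^ (n + 2)) +
        ∑' k : ℕ, stirlingSegment (n + 3) (z + k) := by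
  have hz0 := Complex.slitPlane_ne_zero hz
  refine tendsto_nhds_unique (summable_stirlingSegment hz0 hδ h n).hasSum.tendsto_sum_nat ?_
  simp only [sum_stirlingSegment_eq hz (n + 1).succ_ne_zero]
  have h1 := (((tendsto_inv_add_natCast_pow z (n + 1).succ_ne_zero).sub_const
    (z ^ (n + 2))⁻¹).const_mul (stirlingCoeff (n + 2) : ℂ)).add
      (summable_stirlingSegment hz0 hδ h (n + 1)).hasSum.tendsto_sum_nat
  simpa [inv_pow] using h1

/-- The logarithm of the normalized Gamma function, as an absolutely convergent sum. -/
noncomputable def logNormalizedGamma (z : ℂ) : ℂ :=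
  stirlingCoeff 1 * z⁻¹ - ∑' k : ℕ, stirlingSegment 2 (z + k)

theorem logNormalizedGamma_eq (hz : z ∈ Complex.slitPlane) (hδ : 0 < δ)
    (h : ∀ s : ℝ, 0 ≤ s → δ * (‖z‖ + s) ≤ ‖z + s‖) (n : ℕ) :
    logNormalizedGamma z = ∑ i ∈ Finset.range (n + 2), (stirlingCoeff i : ℂ) * z⁻¹ ^ i -
      ∑' k : ℕ, stirlingSegment (n + 2) (z + k) := by
  induction n with
  | zero => simp [logNormalizedGamma, Finset.sum_range_succ, stirlingCoeff]
  | succ n ih =>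
    rw [ih, tsum_stirlingSegment_eq hz hδ h n, Finset.sum_range_succ _ (n + 2)]
    ring

theorem exp_logNormalizedGamma (hz : z ∈ Complex.slitPlane) (hδ : 0 < δ)
    (h : ∀ s : ℝ, 0 ≤ s → δ * (‖z‖ + s) ≤ ‖z + s‖) :
    Complex.exp (logNormalizedGamma z) = normalizedGamma z := by
  have h1 := (((tendsto_inv_add_natCast_pow z one_ne_zero).sub_const
    (z ^ 1)⁻¹).const_mul (stirlingCoeff 1 : ℂ)).add
      (summable_stirlingSegment (Complex.slitPlane_ne_zero hz) hδ h 0).hasSum.tendsto_sum_nat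
  have h2 := ((Complex.continuous_exp.tendsto _).comp h1.neg).mul
    (tendsto_normalizedGamma_add_natCast hz)
  have h3 : ∀ K : ℕ, (Complex.exp ∘ fun K : ℕ => -(stirlingCoeff 1 * (((z + K) ^ 1)⁻¹ - (z ^ 1)⁻¹) +
        ∑ k ∈ Finset.range K, stirlingSegment (0 + 2) (z + k))) K * normalizedGamma (z + K) =
      normalizedGamma z := fun K => by
    rw [normalizedGamma_eq_exp_sum_mul hz K, sum_stirlingSegment_eq hz one_ne_zero]
    rfl
  rw [← tendsto_nhds_unique (h2.congr h3) tendsto_const_nhds, logNormalizedGamma, mul_one]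
  congr 1
  simp only [pow_one]
  ring

theorem isGevreyExpansionAt_logNormalizedGamma (hz : z ∈ Complex.slitPlane) (hδ : 0 < δ)
    (hδ1 : δ ≤ 1) (h : ∀ s : ℝ, 0 ≤ s → δ * (‖z‖ + s) ≤ ‖z + s‖) {c : ℝ} (hc : 0 < c)
    (hcz : c ≤ ‖z‖) :
    IsGevreyExpansionAt (PowerSeries.mk stirlingCoeff) (logNormalizedGamma z) z⁻¹
      ((1 + δ⁻¹ * (1 + c⁻¹)) * (1 + (c * δ)⁻¹)) δ⁻¹ := by
  have hz0 := Complex.slitPlane_ne_zero hz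
  have hδ1' : 1 ≤ δ⁻¹ := (one_le_inv₀ hδ).2 hδ1
  have hcz' : ‖z‖⁻¹ ≤ c⁻¹ := inv_anti₀ hc hcz
  set K := 1 + δ⁻¹ * (1 + c⁻¹) with hK
  have hK1 : 1 ≤ K := le_add_of_nonneg_right (by positivity)
  have hK0 : 0 ≤ K := zero_le_one.trans hK1
  have hL1 : K ≤ K * (1 + (c * δ)⁻¹) :=
    le_mul_of_one_le_right hK0 (le_add_of_nonneg_right (by positivity))
  have hrem : ∀ n : ℕ, ‖logNormalizedGamma z -
      ∑ i ∈ Finset.range (n + 1), (stirlingCoeff i : ℂ) * z⁻¹ ^ i‖ ≤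
        K * δ⁻¹ ^ (n + 1) * ((n + 1).factorial : ℝ) * ‖z‖⁻¹ ^ (n + 1) := by
    intro n
    have hcoeff : ‖(stirlingCoeff (n + 1) : ℂ) * z⁻¹ ^ (n + 1)‖ ≤
        δ⁻¹ ^ (n + 1) * ((n + 1).factorial : ℝ) * ‖z‖⁻¹ ^ (n + 1) := by
      rw [norm_mul, norm_pow, norm_inv, ← Complex.ofReal_ratCast, Complex.norm_real,
        Real.norm_eq_abs]
      gcongr
      exact (abs_stirlingCoeff_le _).trans
        (le_mul_of_one_le_left (by positivity) (one_le_pow₀ hδ1'))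
    have e : logNormalizedGamma z - ∑ i ∈ Finset.range (n + 1), (stirlingCoeff i : ℂ) * z⁻¹ ^ i =
        stirlingCoeff (n + 1) * z⁻¹ ^ (n + 1) - ∑' k : ℕ, stirlingSegment (n + 2) (z + k) := by
      rw [logNormalizedGamma_eq hz hδ h n, Finset.sum_range_succ _ (n + 1)]
      ring
    rw [e]
    calc _ ≤ δ⁻¹ ^ (n + 1) * ((n + 1).factorial : ℝ) * ‖z‖⁻¹ ^ (n + 1) +
          (n + 1).factorial / δ ^ (n + 2) * (1 + c⁻¹) * ‖z‖⁻¹ ^ (n + 1) := by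
          refine (norm_sub_le _ _).trans (add_le_add hcoeff ?_)
          refine (norm_tsum_stirlingSegment_le hz0 hδ h n).trans ?_
          gcongr
      _ = _ := by
          rw [hK, div_eq_mul_inv, ← inv_pow, pow_succ δ⁻¹ (n + 1)]
          ring
  intro N
  rw [norm_inv]
  simp only [PowerSeries.coeff_mk]
  constructor
  · refine (abs_stirlingCoeff_le N).trans (le_mul_of_one_le_left (by positivity) ?_)
    exact one_le_mul_of_one_le_of_one_le (hK1.trans hL1) (one_le_pow₀ hδ1')
  · rcases N with _ | N
    · have h0 := hrem 0
      simp only [zero_add, Finset.sum_range_one, stirlingCoeff] at h0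
      simp only [Finset.range_zero, Finset.sum_empty, pow_zero, Nat.factorial_zero]
      simp only [Nat.cast_zero, zero_mul, div_zero, Rat.cast_zero, sub_zero, pow_one,
        Nat.factorial_one, Nat.cast_one, mul_one] at h0 ⊢
      refine h0.trans ?_
      calc K * δ⁻¹ * ‖z‖⁻¹ ≤ K * δ⁻¹ * c⁻¹ := by gcongr
        _ = K * (c * δ)⁻¹ := by rw [mul_inv]; ring
        _ ≤ _ := by gcongr; linarith
    · refine (hrem N).trans ?_
      gcongr

end Sector

/-- The refined Stirling formula: there is a sequence of rationals `(gₙ)` such that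
`(2π)^{-1/2}·exp((1/2−z)·Log z + z)·Γ(z)` admits `1 + Σ gₙ z^{-n-1}` as uniform
1-Gevrey asymptotic expansion on every sector `{|z| > c, |arg z| < β}`, `β < π`. -/
theorem stmt_8 :
    ∃ g : ℕ → ℚ, ∀ c : ℝ, 0 < c → ∀ β : ℝ, β ∈ Set.Ioo 0 Real.pi →
      ∃ L M : ℝ, 0 < L ∧ 0 < M ∧
        ∀ z : ℂ, c < ‖z‖ → |Complex.arg z| < β → ∀ N : ℕ,
          ‖(Real.sqrt (2 * Real.pi) : ℂ)⁻¹ *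
              Complex.exp ((1 / 2 - z) * Complex.log z + z) * Complex.Gamma z -
              1 - (∑ n ∈ Finset.range N, (g n : ℂ) / z ^ (n + 1))‖ ≤
            L * M ^ N * (Nat.factorial N : ℝ) * ‖z‖⁻¹ ^ (N + 1) := by
  set A : PowerSeries ℚ := PowerSeries.mk stirlingCoeff with hA
  have hA0 : PowerSeries.constantCoeff A = 0 := by
    simp [hA, ← PowerSeries.coeff_zero_eq_constantCoeff_apply, stirlingCoeff]
  set G : ℕ → ℚ := fun n =>
    ∑ k ∈ Finset.range (n + 1), PowerSeries.coeff n (A ^ k) / (k.factorial : ℚ) with hG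
  refine ⟨fun n => G (n + 1), fun c hc β hβ => ?_⟩
  set δ := √((1 + Real.cos β) / 2) with hδdef
  have hcosβ : -1 < Real.cos β := by
    rw [← Real.cos_pi]
    exact Real.cos_lt_cos_of_nonneg_of_le_pi hβ.1.le le_rfl hβ.2
  have hδ : 0 < δ := Real.sqrt_pos.2 (by linarith)
  have hδ1 : δ ≤ 1 := Real.sqrt_le_one.2 (by linarith [Real.cos_le_one β])
  set L := (1 + δ⁻¹ * (1 + c⁻¹)) * (1 + (c * δ)⁻¹) with hL
  have hL0 : 0 ≤ L := by positivity
  refine ⟨Real.exp (4 * L) * δ⁻¹, 2 * δ⁻¹, by positivity, by positivity, fun z hcz hz N => ?_⟩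
  have hslit : z ∈ Complex.slitPlane := by
    refine Complex.mem_slitPlane_iff_arg.2 ⟨fun h => ?_, norm_pos_iff.1 (hc.trans hcz)⟩
    rw [h, abs_of_pos Real.pi_pos] at hz
    exact lt_asymm hz hβ.2
  have hsec : ∀ s : ℝ, 0 ≤ s → δ * (‖z‖ + s) ≤ ‖z + s‖ := fun s hs =>
    Complex.sqrt_mul_norm_add_le_norm_add hβ.2.le hz.le hs
  have hmain := (isGevreyExpansionAt_logNormalizedGamma hslit hδ hδ1 hsec hc hcz.le).norm_exp_sub_le
    hA0 hL0 (inv_pos.2 hδ).le (N + 1)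
  have hG0 : G 0 = 1 := by simp [hG]
  rw [exp_logNormalizedGamma hslit hδ hsec, Finset.sum_range_succ', pow_zero, mul_one,
    norm_inv] at hmain
  have hfac : ((N + 1).factorial : ℝ) ≤ 2 ^ N * (N.factorial : ℝ) := by
    rw [Nat.factorial_succ]
    exact_mod_cast Nat.mul_le_mul_right _ (Nat.lt_two_pow_self (n := N))
  calc _ = ‖normalizedGamma z -
        (∑ n ∈ Finset.range N, (G (n + 1) : ℂ) * z⁻¹ ^ (n + 1) + (G 0 : ℂ))‖ := by
        rw [hG0, normalizedGamma, Rat.cast_one, sub_sub, add_comm (1 : ℂ)]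
        simp only [div_eq_mul_inv, inv_pow]
    _ ≤ Real.exp (4 * L) * δ⁻¹ ^ (N + 1) * ((N + 1).factorial : ℝ) * ‖z‖⁻¹ ^ (N + 1) := hmain
    _ ≤ Real.exp (4 * L) * δ⁻¹ ^ (N + 1) * (2 ^ N * (N.factorial : ℝ)) * ‖z‖⁻¹ ^ (N + 1) := by
        gcongr
    _ = _ := by rw [mul_pow, pow_succ δ⁻¹]; ring
end

section
/- For θ ∈ (−π,π)∖{0} and z ∈ ℂ with Re(z·e^{iθ}) > 0, set I_θ(z) := e^{iθ}∫₀^{+∞} e^{−z·ξe^{iθ}}·(1 + ξe^{iθ})^{−1} dξ. Then for every θ⁺ ∈ (0, π), θ⁻ ∈ (−π, 0) and every z ∈ ℂ with Re z < 0, Re(z·e^{iθ⁺}) > 0 and Re(z·e^{iθ⁻}) > 0, one has I_{θ⁺}(z) − I_{θ⁻}(z) = 2πi·e^z. -/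
open MeasureTheory
open Filter Topology

/-- An entire primitive of `(e^{-zζ} - e^z) / (1 + ζ)`, whose singularity at `-1` is removable. -/
lemma exists_hasDerivAt_exp_sub_div (z : ℂ) :
    ∃ F : ℂ → ℂ, ∀ ζ, ζ ≠ -1 →
      HasDerivAt F ((Complex.exp (-z * ζ) - Complex.exp z) * (1 + ζ)⁻¹) ζ := by
  have hf : Differentiable ℂ (dslope (fun ζ => Complex.exp (-z * ζ)) (-1)) := by
    rw [← differentiableOn_univ, Complex.differentiableOn_dslope univ_mem]
    exact Differentiable.differentiableOn (by fun_prop)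
  obtain ⟨F, hF⟩ := hf.isExactOn_univ
  refine ⟨F, fun ζ hζ => ?_⟩
  refine (hF ζ (Set.mem_univ ζ)).congr_deriv ?_
  rw [dslope_of_ne _ hζ, slope_def_field, div_eq_mul_inv]
  simp [add_comm]

lemma one_add_ofReal_mul_mem_slitPlane {e : ℂ} (he : e.im ≠ 0) (ξ : ℝ) :
    1 + ξ * e ∈ Complex.slitPlane := by
  rw [Complex.mem_slitPlane_iff]
  rcases eq_or_ne ξ 0 with rfl | h
  · simp
  · right
    simp [h, he]

lemma norm_inv_one_add_ofReal_mul_le {e : ℂ} (he : e.im ≠ 0) (ξ : ℝ) :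
    ‖(1 + ξ * e)⁻¹‖ ≤ ‖e‖ / |e.im| := by
  have h0 : 0 < ‖1 + ξ * e‖ :=
    norm_pos_iff.2 (Complex.slitPlane_ne_zero (one_add_ofReal_mul_mem_slitPlane he ξ))
  have h : |e.im| ≤ ‖e‖ * ‖1 + ξ * e‖ := by
    calc |e.im| = |((1 + ξ * e) * (starRingEnd ℂ) e).im| := by
          rw [← abs_neg]
          congr 1
          simp
          ring
      _ ≤ ‖(1 + ξ * e) * (starRingEnd ℂ) e‖ := Complex.abs_im_le_norm _
      _ = _ := by rw [norm_mul, Complex.norm_conj, mul_comm]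
  rw [norm_inv, inv_eq_one_div, div_le_div_iff₀ h0 (abs_pos.2 he)]
  simpa using h

lemma integrableOn_exp_mul_inv_one_add {z e : ℂ} (he : e.im ≠ 0) (hze : 0 < (z * e).re) :
    IntegrableOn (fun ξ : ℝ => Complex.exp (-z * (ξ * e)) * (1 + ξ * e)⁻¹) (Set.Ioi 0) := by
  have h : IntegrableOn (fun ξ : ℝ => Complex.exp (-z * (ξ * e))) (Set.Ioi 0) := by
    refine (integrableOn_exp_mul_complex_Ioi (a := -(z * e)) (by simpa using hze) 0).congr_fun
      (fun ξ _ => ?_) measurableSet_Ioi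
    change Complex.exp _ = Complex.exp _
    congr 1
    ring
  refine h.mul_bdd (c := ‖e‖ / |e.im|) ?_ ?_
  · exact (Continuous.inv₀ (by fun_prop) fun ξ =>
      Complex.slitPlane_ne_zero (one_add_ofReal_mul_mem_slitPlane he ξ)).aestronglyMeasurable
  · exact ae_of_all _ (norm_inv_one_add_ofReal_mul_le he)

lemma tendsto_primitive_add_log {z e : ℂ} (he : e.im ≠ 0) (hze : 0 < (z * e).re) {F : ℂ → ℂ}
    (hF : ∀ ζ, ζ ≠ -1 →
      HasDerivAt F ((Complex.exp (-z * ζ) - Complex.exp z) * (1 + ζ)⁻¹) ζ) :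
    Tendsto (fun R : ℝ => F (R * e) + Complex.exp z * Complex.log (1 + R * e)) atTop
      (𝓝 (e * (∫ ξ in Set.Ioi (0 : ℝ), Complex.exp (-z * (ξ * e)) * (1 + ξ * e)⁻¹) + F 0)) := by
  have hlim := ((intervalIntegral_tendsto_integral_Ioi 0
    (integrableOn_exp_mul_inv_one_add he hze) tendsto_id).const_mul e).add_const (F 0)
  refine hlim.congr fun R => ?_
  have hne : ∀ ξ : ℝ, 1 + ξ * e ≠ 0 := fun ξ =>
    Complex.slitPlane_ne_zero (one_add_ofReal_mul_mem_slitPlane he ξ)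
  have hderiv : ∀ ξ : ℝ, HasDerivAt
      (fun ξ : ℝ => F (ξ * e) + Complex.exp z * Complex.log (1 + ξ * e))
      (e * (Complex.exp (-z * (ξ * e)) * (1 + ξ * e)⁻¹)) ξ := fun ξ => by
    have h1 : HasDerivAt (fun ξ : ℝ => (ξ : ℂ) * e) e ξ := by
      simpa using (Complex.ofRealCLM.hasDerivAt (x := ξ)).mul_const e
    have h2 := (hF (ξ * e) fun h => hne ξ (by rw [h]; ring)).comp ξ h1
    have h3 := (((h1.const_add 1).clog_real
      (one_add_ofReal_mul_mem_slitPlane he ξ)).const_mul (Complex.exp z))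
    refine (h2.add h3).congr_deriv ?_
    rw [div_eq_mul_inv]
    ring
  have hint := intervalIntegral.integral_eq_sub_of_hasDerivAt (a := 0) (b := R)
    (fun ξ _ => hderiv ξ) (Continuous.intervalIntegrable
      (by have := Continuous.inv₀ (f := fun ξ : ℝ => 1 + ξ * e) (by fun_prop) hne
          fun_prop) _ _)
  rw [intervalIntegral.integral_const_mul] at hint
  rw [id, hint]
  simp

lemma tendsto_log_one_add_sub_log_one_sub {e : ℂ} (he : e.im ≠ 0) :
    Tendsto (fun R : ℝ => Complex.log (1 + R * e) - Complex.log (1 - R * e)) atTop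
      (𝓝 (Complex.log e - Complex.log (-e))) := by
  have key : ∀ w : ℂ, w.im ≠ 0 → Tendsto
      (fun R : ℝ => Complex.log (1 + R * w) - Real.log R) atTop (𝓝 (Complex.log w)) := by
    intro w hw
    have h0 : Tendsto (fun R : ℝ => ((R⁻¹ : ℝ) : ℂ) + w) atTop (𝓝 w) := by
      simpa using ((Complex.continuous_ofReal.tendsto 0).comp tendsto_inv_atTop_zero).add_const w
    refine (h0.clog (Complex.mem_slitPlane_iff.2 (Or.inr hw))).congr' ?_
    filter_upwards [eventually_gt_atTop 0] with R hR
    have hne : ((R⁻¹ : ℝ) : ℂ) + w ≠ 0 := fun h => hw (by simpa using congrArg Complex.im h)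
    have hR' : (R : ℂ) ≠ 0 := by exact_mod_cast hR.ne'
    have : 1 + R * w = R * (((R⁻¹ : ℝ) : ℂ) + w) := by
      push_cast
      field_simp
    rw [this, Complex.log_ofReal_mul hR hne]
    ring
  refine ((key e he).sub (key (-e) (by simpa using he))).congr fun R => ?_
  rw [mul_neg, ← sub_eq_add_neg]
  ring

lemma log_sub_log_neg_of_im_pos {e : ℂ} (he : 0 < e.im) :
    Complex.log e - Complex.log (-e) = Real.pi * Complex.I := by
  simp only [Complex.log, norm_neg, Complex.arg_neg_eq_arg_sub_pi_of_im_pos he]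
  push_cast
  ring

lemma log_sub_log_neg_of_im_neg {e : ℂ} (he : e.im < 0) :
    Complex.log e - Complex.log (-e) = -(Real.pi * Complex.I) := by
  simp only [Complex.log, norm_neg, Complex.arg_neg_eq_arg_add_pi_of_im_neg he]
  push_cast
  ring

/-- Far out in the half-plane of decay, `e^{-zζ} / (1 + ζ)` minus its polar part, corrected by a
pole at `1`, is `O(|ζ|⁻²)`. -/
lemma norm_exp_sub_div_sub_le {z ζ : ℂ} {r s : ℝ} (hr : 2 ≤ r) (hζ : r ≤ ‖ζ‖)
    (hs : s ≤ (z * ζ).re) :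
    ‖(Complex.exp (-z * ζ) - Complex.exp z) * (1 + ζ)⁻¹ - Complex.exp z * (1 - ζ)⁻¹‖ ≤
      Real.exp (-s) + ‖Complex.exp z‖ * (8 / r ^ 2) := by
  have h1 : r / 2 ≤ ‖1 + ζ‖ := by
    have := norm_sub_le (1 + ζ) 1
    simp at this
    linarith
  have h2 : r / 2 ≤ ‖1 - ζ‖ := by
    have := norm_sub_le 1 (1 - ζ)
    simp at this
    linarith
  have h1' : 1 + ζ ≠ 0 := norm_pos_iff.1 (by linarith)
  have h2' : 1 - ζ ≠ 0 := norm_pos_iff.1 (by linarith)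
  have heq : (Complex.exp (-z * ζ) - Complex.exp z) * (1 + ζ)⁻¹ - Complex.exp z * (1 - ζ)⁻¹ =
      Complex.exp (-z * ζ) * (1 + ζ)⁻¹ - Complex.exp z * (2 * ((1 + ζ)⁻¹ * (1 - ζ)⁻¹)) := by
    field_simp
    ring
  have i1 : ‖(1 + ζ)⁻¹‖ ≤ (r / 2)⁻¹ := by
    rw [norm_inv]; exact inv_anti₀ (by linarith) h1
  have i2 : ‖(1 - ζ)⁻¹‖ ≤ (r / 2)⁻¹ := by
    rw [norm_inv]; exact inv_anti₀ (by linarith) h2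
  have i3 : (r / 2)⁻¹ ≤ 1 := inv_le_one_of_one_le₀ (by linarith)
  have i4 : ‖Complex.exp (-z * ζ)‖ ≤ Real.exp (-s) := by
    rw [Complex.norm_exp]
    refine Real.exp_le_exp.2 ?_
    rw [neg_mul, Complex.neg_re]
    linarith
  rw [heq]
  refine (norm_sub_le _ _).trans (add_le_add ?_ ?_)
  · rw [norm_mul, ← mul_one (Real.exp (-s))]
    exact mul_le_mul i4 (i1.trans i3) (norm_nonneg _) (Real.exp_pos _).le
  · rw [norm_mul]
    refine mul_le_mul_of_nonneg_left ?_ (norm_nonneg _)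
    rw [norm_mul, norm_mul]
    calc ‖(2 : ℂ)‖ * (‖(1 + ζ)⁻¹‖ * ‖(1 - ζ)⁻¹‖) ≤ 2 * ((r / 2)⁻¹ * (r / 2)⁻¹) := by
          rw [Complex.norm_ofNat]
          gcongr
      _ = 8 / r ^ 2 := by
          have : r ≠ 0 := by linarith
          field_simp
          norm_num

lemma one_sub_mem_slitPlane {z ζ : ℂ} (hz : z.re < 0) (hζ : 0 ≤ (z * ζ).re) :
    1 - ζ ∈ Complex.slitPlane := by
  rw [Complex.mem_slitPlane_iff]
  by_contra! h
  obtain ⟨h1, h2⟩ := h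
  simp at h1 h2
  simp [h2] at hζ
  nlinarith

/-- The increment of the primitive along the chord joining `R e₁` to `R e₂` tends to `0`, because
this chord lies in the half-plane of decay. -/
lemma tendsto_primitive_sub {z e₁ e₂ : ℂ} (hz : z.re < 0) (h₁ : 0 < (z * e₁).re)
    (h₂ : 0 < (z * e₂).re) {F : ℂ → ℂ}
    (hF : ∀ ζ, ζ ≠ -1 →
      HasDerivAt F ((Complex.exp (-z * ζ) - Complex.exp z) * (1 + ζ)⁻¹) ζ) :
    Tendsto (fun R : ℝ => (F (R * e₁) + Complex.exp z * Complex.log (1 - R * e₁)) -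
      (F (R * e₂) + Complex.exp z * Complex.log (1 - R * e₂))) atTop (𝓝 0) := by
  have hz0 : 0 < ‖z‖ := norm_pos_iff.2 fun h => by simp [h] at hz
  set m := min (z * e₁).re (z * e₂).re with hm
  have hm0 : 0 < m := lt_min h₁ h₂
  set c := m / ‖z‖ with hc
  have hc0 : 0 < c := div_pos hm0 hz0
  have hbound : Tendsto (fun R : ℝ => (Real.exp (-(m * R)) +
      ‖Complex.exp z‖ * (8 / (c * R) ^ 2)) * (R * ‖e₁ - e₂‖)) atTop (𝓝 0) := by
    have t1 : Tendsto (fun R : ℝ => R * Real.exp (-m * R)) atTop (𝓝 0) := by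
      simpa using tendsto_rpow_mul_exp_neg_mul_atTop_nhds_zero 1 m hm0
    have t2 := (t1.const_mul ‖e₁ - e₂‖).add
      (tendsto_inv_atTop_zero.const_mul (‖Complex.exp z‖ * 8 / c ^ 2 * ‖e₁ - e₂‖))
    rw [mul_zero, mul_zero, add_zero] at t2
    refine t2.congr' ?_
    filter_upwards [eventually_gt_atTop 0] with R hR
    rw [neg_mul]
    field_simp
  refine squeeze_zero_norm' ?_ hbound
  filter_upwards [eventually_gt_atTop 0, eventually_ge_atTop (2 / c)] with R hR hR2
  have hcR : 2 ≤ c * R := by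
    rw [div_le_iff₀ hc0] at hR2
    linarith
  have hnorm : ∀ ζ ∈ {ζ : ℂ | m * R ≤ (z * ζ).re}, c * R ≤ ‖ζ‖ := by
    intro ζ hζ
    have : m * R ≤ ‖z‖ * ‖ζ‖ := by
      rw [← norm_mul]
      exact le_trans hζ (Complex.re_le_norm _)
    rw [hc, div_mul_eq_mul_div, div_le_iff₀ hz0]
    linarith
  have hconv : Convex ℝ {ζ : ℂ | m * R ≤ (z * ζ).re} :=
    convex_halfSpace_ge ⟨fun x y => by simp; ring, fun a x => by simp; ring⟩ _
  have hmem : ∀ e : ℂ, m ≤ (z * e).re → (R * e : ℂ) ∈ {ζ : ℂ | m * R ≤ (z * ζ).re} := by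
    intro e he
    have : z * (R * e) = R * (z * e) := by ring
    rw [Set.mem_ofPred_eq, this, Complex.re_ofReal_mul, mul_comm]
    exact mul_le_mul_of_nonneg_left he hR.le
  have hmain := hconv.norm_image_sub_le_of_norm_hasDerivWithin_le
    (f := fun ζ => F ζ + Complex.exp z * Complex.log (1 - ζ))
    (f' := fun ζ => (Complex.exp (-z * ζ) - Complex.exp z) * (1 + ζ)⁻¹ -
      Complex.exp z * (1 - ζ)⁻¹)
    (fun ζ hζ => by
      have hne : ζ ≠ -1 := by
        rintro rfl
        have := hnorm _ hζ
        simp at this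
        linarith
      have hlog := (((hasDerivAt_id ζ).const_sub 1).clog (one_sub_mem_slitPlane hz
        ((mul_pos hm0 hR).le.trans hζ))).const_mul (Complex.exp z)
      refine (((hF ζ hne).add hlog).congr_deriv ?_).hasDerivWithinAt
      simp only [id]
      ring)
    (fun ζ hζ => norm_exp_sub_div_sub_le hcR (hnorm ζ hζ) hζ)
    (hmem e₂ (min_le_right _ _)) (hmem e₁ (min_le_left _ _))
  rw [← mul_sub, norm_mul, Complex.norm_real, Real.norm_of_nonneg hR.le] at hmain
  exact hmain

/-- Stokes phenomenon for the Euler series: the two lateral Borel sums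
`I_θ(z) = e^{iθ} ∫₀^∞ e^{−zξe^{iθ}}(1+ξe^{iθ})^{-1} dξ` (directions `θ⁺ ∈ (0,π)` and
`θ⁻ ∈ (−π,0)`) differ by `2πi e^z` on the left half-plane. -/
theorem stmt_13 (θp θm : ℝ) (hθp : θp ∈ Set.Ioo 0 Real.pi)
    (hθm : θm ∈ Set.Ioo (-Real.pi) 0) (z : ℂ) (hre : z.re < 0)
    (hp : 0 < (z * Complex.exp ((θp : ℂ) * Complex.I)).re)
    (hm : 0 < (z * Complex.exp ((θm : ℂ) * Complex.I)).re) :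
    Complex.exp ((θp : ℂ) * Complex.I) *
        (∫ ξ in Set.Ioi (0:ℝ),
          Complex.exp (-z * ((ξ : ℂ) * Complex.exp ((θp : ℂ) * Complex.I))) *
            (1 + (ξ : ℂ) * Complex.exp ((θp : ℂ) * Complex.I))⁻¹) -
      Complex.exp ((θm : ℂ) * Complex.I) *
        (∫ ξ in Set.Ioi (0:ℝ),
          Complex.exp (-z * ((ξ : ℂ) * Complex.exp ((θm : ℂ) * Complex.I))) *
            (1 + (ξ : ℂ) * Complex.exp ((θm : ℂ) * Complex.I))⁻¹) =
      2 * (Real.pi : ℂ) * Complex.I * Complex.exp z := by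
  have ip : 0 < (Complex.exp ((θp : ℂ) * Complex.I)).im := by
    rw [Complex.exp_ofReal_mul_I_im]
    exact Real.sin_pos_of_mem_Ioo hθp
  have im : (Complex.exp ((θm : ℂ) * Complex.I)).im < 0 := by
    rw [Complex.exp_ofReal_mul_I_im]
    exact Real.sin_neg_of_neg_of_neg_pi_lt hθm.2 hθm.1
  generalize Complex.exp ((θp : ℂ) * Complex.I) = ep at *
  generalize Complex.exp ((θm : ℂ) * Complex.I) = em at *
  obtain ⟨F, hF⟩ := exists_hasDerivAt_exp_sub_div z
  have hrays := (tendsto_primitive_add_log ip.ne' hp hF).sub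
    (tendsto_primitive_add_log im.ne hm hF)
  have hlogs := ((tendsto_log_one_add_sub_log_one_sub ip.ne').sub
    (tendsto_log_one_add_sub_log_one_sub im.ne)).const_mul (Complex.exp z)
  have hsum := (tendsto_primitive_sub hre hp hm hF).add hlogs
  rw [log_sub_log_neg_of_im_pos ip, log_sub_log_neg_of_im_neg im] at hsum
  have h := tendsto_nhds_unique hrays (hsum.congr fun R => by ring)
  linear_combination h
end
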